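/- arXiv:math/0405393 — 2 statements merged into one kernel-verified Lean document; each statement's English description precedes it below -/
import Mathlib

section
/- Let d, q ≥ 1. (a) For every continuous map F : Δ^{(d+1)(q-1)} → ℝ^d, every winding partition of the restriction of F to the (d−1)-skeleton Δ_{d-1}^{(d+1)(q-1)} is a Tverberg partition of F. (b) If d ≥ 3, then for every continuous map f : Δ_{d-1}^{(d+1)(q-1)} → ℝ^d and every ε > 0 there exists a continuous map F : Δ^{(d+1)(q-1)} → ℝ^d with sup_{x ∈ Δ_{d-1}^{(d+1)(q-1)}} ‖F(x) − f(x)‖ < ε such that every Tverberg partition of F is a winding partition of f. -/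
open scoped BigOperators

noncomputable section

/-- Euclidean space `ℝ^d`. -/
abbrev Euc (d : ℕ) : Type := EuclideanSpace ℝ (Fin d)

/-- The standard `N`-simplex `Δ^N ⊆ ℝ^{N+1}`. -/
def stdSimp (N : ℕ) : Set (Fin (N+1) → ℝ) :=
  {x | (∀ i, 0 ≤ x i) ∧ ∑ i, x i = 1}

/-- The face `σ_S` of `Δ^N` spanned by the vertices in `S`. -/
def simpFace {N : ℕ} (S : Finset (Fin (N+1))) : Set (Fin (N+1) → ℝ) :=
  {x ∈ stdSimp N | ∀ i ∉ S, x i = 0}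

/-- The `k`-skeleton `Δ_k^N` of the standard `N`-simplex. -/
def skel (N k : ℕ) : Set (Fin (N+1) → ℝ) :=
  {x ∈ stdSimp N | {i | x i ≠ 0}.ncard ≤ k + 1}

/-- A Tverberg partition for (the relevant restriction of) `f`: a set of `q`
pairwise disjoint nonempty vertex subsets whose faces have images with a common point. -/
def IsTverbergPartition (q : ℕ) {N d : ℕ}
    (f : (Fin (N+1) → ℝ) → Euc d) (P : Finset (Finset (Fin (N+1)))) : Prop :=
  P.card = q ∧ (∀ S ∈ P, S.Nonempty) ∧
  (∀ S ∈ P, ∀ T ∈ P, S ≠ T → Disjoint S T) ∧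
  (⋂ S ∈ P, f '' simpFace S).Nonempty

/-- The boundary `∂σ_S` of the face `σ_S`. -/
def simpFaceBoundary {N : ℕ} (S : Finset (Fin (N+1))) : Set (Fin (N+1) → ℝ) :=
  {x ∈ simpFace S | ∃ i ∈ S, x i = 0}

/-- `p ∈ W_{≠0}(f|_{∂σ_S})`: either `p` is in the image of the boundary, or the
corestriction of `f|_{∂σ_S}` to `ℝ^d \ {p}` is not nullhomotopic (there is no
continuous map agreeing with `f` on `∂σ_S` that is homotopic to a constant). -/
def InWne (d : ℕ) {N : ℕ} (f : (Fin (N+1) → ℝ) → Euc d)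
    (S : Finset (Fin (N+1))) (p : Euc d) : Prop :=
  p ∈ f '' simpFaceBoundary S ∨
  ¬ ∃ (g : C(↥(simpFaceBoundary S), ↥({p}ᶜ : Set (Euc d))))
      (y : ↥({p}ᶜ : Set (Euc d))),
      (∀ x : ↥(simpFaceBoundary S), (g x : Euc d) = f ↑x) ∧
      g.Homotopic (ContinuousMap.const _ y)

/-- A winding partition (in dimension `d`) for `f` defined on the `(d-1)`-skeleton:
`q` pairwise disjoint nonempty vertex subsets, each of size at most `d+1`, together
with a winding point `p`. -/
def IsWindingPartition (d q : ℕ) {N : ℕ}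
    (f : (Fin (N+1) → ℝ) → Euc d) (P : Finset (Finset (Fin (N+1)))) : Prop :=
  P.card = q ∧ (∀ S ∈ P, S.Nonempty) ∧ (∀ S ∈ P, S.card ≤ d + 1) ∧
  (∀ S ∈ P, ∀ T ∈ P, S ≠ T → Disjoint S T) ∧
  ∃ p : Euc d, ∀ S ∈ P,
    (S.card ≤ d → p ∈ f '' simpFace S) ∧
    (S.card = d + 1 → InWne d f S p)

/-!
A point `p` is a winding point for a family of faces exactly when, for every face `σ_S` of the
family, the given map cannot be extended over `σ_S` without hitting `p`: a map on `∂σ_S` is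
nullhomotopic in `ℝ^d \ {p}` if and only if it extends to the convex set `σ_S`. This gives (a).

For (b), put the map into general position by a small perturbation `g`. Then only finitely many
points `p` lie in a common intersection of the images of disjoint low-dimensional faces as large as
a Tverberg partition requires, and it remains to extend `g` over each `d`-face so as to miss
those of the finitely many points that can be missed individually. Order these points by their
first coordinate in `ℝ^d = ℝ × W` and join an extension missing the lower points to one missing the
higher points. The join misses all of them if no point of the face is sent by both extensions to the
`W`-coordinates of points to be missed, which is generic because `d < 2(d - 1)` when `d ≥ 3`.
-/

open Set Metric Topology Filter

section Extension

variable {X Y E : Type*} [TopologicalSpace Y] [NormedAddCommGroup E] [NormedSpace ℝ E]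

/-- The restriction of `f` to `A` extends over `C` with values in `U`. The extension is taken to be
defined on the whole ambient space, which for closed `C` and a finite-dimensional target is no
restriction by Tietze's theorem. -/
def ExtendsOver [TopologicalSpace X] (f : X → Y) (A C : Set X) (U : Set Y) : Prop :=
  ∃ G : X → Y, Continuous G ∧ EqOn G f A ∧ MapsTo G C U

theorem ExtendsOver.congr [TopologicalSpace X] {f g : X → Y} {A C : Set X} {U : Set Y}
    (h : ExtendsOver f A C U) (hfg : EqOn f g A) : ExtendsOver g A C U :=
  let ⟨G, hG, hGA, hGC⟩ := h
  ⟨G, hG, hGA.trans hfg, hGC⟩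

theorem extendsOver_homeomorph_comp_iff {Z : Type*} [TopologicalSpace X] [TopologicalSpace Z]
    (e : Y ≃ₜ Z) {f : X → Y} {A C : Set X} {U : Set Y} :
    ExtendsOver (e ∘ f) A C (e '' U) ↔ ExtendsOver f A C U := by
  refine ⟨fun ⟨G, hG, hGA, hGC⟩ => ⟨e.symm ∘ G, by fun_prop, fun x hx => ?_, fun x hx => ?_⟩,
    fun ⟨G, hG, hGA, hGC⟩ => ⟨e ∘ G, by fun_prop, fun x hx => congrArg e (hGA hx),
      fun x hx => mem_image_of_mem e (hGC hx)⟩⟩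
  · simp only [Function.comp_apply, hGA hx, e.symm_apply_apply]
  · obtain ⟨y, hy, hyx⟩ := hGC hx
    simpa only [Function.comp_apply, ← hyx, e.symm_apply_apply] using hy

variable [FiniteDimensional ℝ E]

theorem exists_continuous_eqOn_of_isClosed [TopologicalSpace X] [NormalSpace X] {s : Set X}
    (hs : IsClosed s) {f : X → E} (hf : ContinuousOn f s) :
    ∃ g : X → E, Continuous g ∧ EqOn g f s := by
  obtain ⟨g, hg⟩ := ContinuousMap.exists_restrict_eq hs ⟨_, hf.domRestrict⟩
  exact ⟨g, g.continuous, fun x hx => DFunLike.congr_fun hg ⟨x, hx⟩⟩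

theorem extendsOver_self_iff [TopologicalSpace X] [NormalSpace X] {f : X → E} {C : Set X}
    {U : Set E} (hC : IsClosed C) (hf : ContinuousOn f C) : ExtendsOver f C C U ↔ MapsTo f C U := by
  refine ⟨fun ⟨G, _, hGf, hGC⟩ => hGC.congr hGf, fun hfC => ?_⟩
  obtain ⟨G, hG, hGf⟩ := exists_continuous_eqOn_of_isClosed hC hf
  exact ⟨G, hG, hGf, hfC.congr hGf.symm⟩

theorem exists_continuous_eqOn_norm_le_of_isClosed [TopologicalSpace X] [NormalSpace X] {s : Set X}
    (hs : IsClosed s) {f : X → E} (hf : ContinuousOn f s) {r : ℝ} (hr : 0 < r)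
    (hfr : ∀ x ∈ s, ‖f x‖ ≤ r) :
    ∃ g : X → E, Continuous g ∧ EqOn g f s ∧ ∀ x, ‖g x‖ ≤ r := by
  have := Metric.instTietzeExtensionClosedBall ℝ (0 : E) hr
  obtain ⟨g, hgr, hg⟩ := (⟨_, hf.domRestrict⟩ : C(s, E)).exists_forall_mem_restrict_eq hs
    (t := closedBall 0 r) (fun x => by simpa using hfr x x.2)
  exact ⟨g, g.continuous, fun x hx => DFunLike.congr_fun hg ⟨x, hx⟩, fun x => by simpa using hgr x⟩

variable [PseudoMetricSpace X] {f : X → E} {A C : Set X} {U : Set E}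

/- The homotopy on `A`, minus the extension of its final map, extends to `X` by Tietze, so the
homotopy extends to a map `M` on `I × X` that agrees with `K` at time `1`. It stays in `U` near `A`;
there we run it, and further away we jump to time `1`. -/
theorem ExtendsOver.of_homotopic (hA : IsClosed A) (hU : IsOpen U) {f' : X → E} {g g' : C(A, U)}
    (hg : ∀ x, (g x : E) = f x) (hg' : ∀ x, (g' x : E) = f' x) (hgg' : g.Homotopic g')
    (hf' : ExtendsOver f' A C U) : ExtendsOver f A C U := by
  obtain ⟨K, hK, hKA, hKC⟩ := hf'
  obtain ⟨H⟩ := hgg'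
  obtain ⟨D, hD⟩ := ContinuousMap.exists_extension'
    (IsClosedEmbedding.id.prodMap hA.isClosedEmbedding_subtypeVal)
    (⟨fun z : unitInterval × A => (H z : E) - K z.2, by fun_prop⟩ : C(unitInterval × A, E))
  have hDA (t : unitInterval) (x : A) : D (t, x) = H (t, x) - K x := congrFun hD (t, x)
  let M : unitInterval × X → E := fun z => K z.2 + (D z - D (1, z.2))
  have hM : Continuous M := by fun_prop
  have hMA (t : unitInterval) (x : A) : M (t, x) = H (t, x) := by
    simp only [M, hDA, H.apply_one, hg', hKA x.2, sub_self, sub_zero, add_sub_cancel]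
  have hbad : IsClosed (Prod.snd '' (M ⁻¹' Uᶜ)) :=
    isClosedMap_snd_of_compactSpace _ (hU.isClosed_compl.preimage hM)
  obtain ⟨u, hu₀, hu₁, hu⟩ := exists_continuous_zero_one_of_isClosed hA hbad <| by
    rw [disjoint_right]
    rintro _ ⟨⟨t, x⟩, hx, rfl⟩ hxA
    exact hx (hMA t ⟨x, hxA⟩ ▸ (H (t, ⟨x, hxA⟩)).2)
  refine ⟨fun x => M (⟨u x, hu x⟩, x), by fun_prop, fun x hx => ?_, fun x hx => ?_⟩
  · have : (⟨u x, hu x⟩ : unitInterval) = 0 := Subtype.ext (hu₀ hx)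
    simp only [this, hMA 0 ⟨x, hx⟩, H.apply_zero, hg]
  · by_cases hxU : x ∈ Prod.snd '' (M ⁻¹' Uᶜ)
    · have : (⟨u x, hu x⟩ : unitInterval) = 1 := Subtype.ext (hu₁ hxU)
      simpa only [this, M, sub_self, add_zero] using hKC hx
    · by_contra hMU
      exact hxU ⟨_, hMU, rfl⟩

theorem ExtendsOver.of_segment_subset (hA : IsClosed A) (hU : IsOpen U) (hf : ContinuousOn f A)
    {K : X → E} (hK : Continuous K) (hKC : MapsTo K C U)
    (hfK : ∀ x ∈ A, segment ℝ (f x) (K x) ⊆ U) : ExtendsOver f A C U := by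
  have hfA : Continuous fun x : A => f x := continuousOn_iff_continuous_domRestrict.1 hf
  let g : C(A, U) := ⟨fun x => ⟨f x, hfK x x.2 (left_mem_segment ..)⟩, hfA.subtype_mk _⟩
  let g' : C(A, U) := ⟨fun x => ⟨K x, hfK x x.2 (right_mem_segment ..)⟩, by fun_prop⟩
  have hline (z : unitInterval × A) : AffineMap.lineMap (g z.2 : E) (K z.2) (z.1 : ℝ) ∈ U :=
    hfK _ z.2.2 (lineMap_mem_segment ℝ _ _ z.1.2)
  let H : g.Homotopy g' :=
    { toFun := fun z => ⟨_, hline z⟩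
      continuous_toFun := by simp only [AffineMap.lineMap_apply_module]; fun_prop
      map_zero_left := fun x => Subtype.ext (AffineMap.lineMap_apply_zero ..)
      map_one_left := fun x => Subtype.ext (AffineMap.lineMap_apply_one ..) }
  exact .of_homotopic hA hU (fun _ => rfl) (fun _ => rfl) ⟨H⟩ ⟨K, hK, fun _ _ => rfl, hKC⟩

theorem extendsOver_iff_homotopic_const [ContractibleSpace C] (hA : IsClosed A) (hAC : A ⊆ C)
    (hU : IsOpen U) : ExtendsOver f A C U ↔
      ∃ (g : C(A, U)) (y : U), (∀ x, (g x : E) = f x) ∧ g.Homotopic (.const _ y) := by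
  constructor
  · rintro ⟨G, hG, hGA, hGC⟩
    let G' : C(C, U) := ⟨hGC.restrict, hG.continuousOn.mapsToRestrict hGC⟩
    let j : C(A, C) := ⟨inclusion hAC, continuous_inclusion hAC⟩
    obtain ⟨y, hy⟩ := ((id_nullhomotopic C).comp_right G').comp_left j
    exact ⟨_, y, fun x => hGA x.2, hy⟩
  · rintro ⟨g, y, hg, hgy⟩
    exact .of_homotopic hA hU hg (fun _ => rfl) hgy
      ⟨fun _ => y, continuous_const, fun _ _ => rfl, fun _ _ => y.2⟩

end Extension

section Stability

theorem exists_pos_forall_disjoint_ball {X Y : Type*} [TopologicalSpace X] [PseudoMetricSpace Y]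
    {C : Set X} (hC : IsCompact C) {f : X → Y} (hf : ContinuousOn f C) {P : Set Y}
    (hP : IsClosed P) (hfP : MapsTo f C Pᶜ) : ∃ δ > 0, ∀ x ∈ C, Disjoint (ball (f x) δ) P := by
  obtain ⟨δ, hδ, hδP⟩ := (hC.image_of_continuousOn hf).exists_thickening_subset_open
    hP.isOpen_compl hfP.image_subset
  exact ⟨δ, hδ, fun x hx => subset_compl_iff_disjoint_right.1 fun y hy =>
    hδP (mem_thickening_iff.2 ⟨_, mem_image_of_mem f hx, hy⟩)⟩

variable {X E : Type*} [PseudoMetricSpace X] [NormedAddCommGroup E] [NormedSpace ℝ E]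
  [FiniteDimensional ℝ E] {f : X → E} {A C : Set X} {p : E}

theorem ExtendsOver.exists_pos_forall_near (h : ExtendsOver f A C {p}ᶜ) (hA : IsClosed A)
    (hC : IsCompact C) (hAC : A ⊆ C) :
    ∃ δ > 0, ∀ f' : X → E, ContinuousOn f' A → (∀ x ∈ A, dist (f' x) (f x) < δ) →
      ∀ p' ∈ ball p δ, ExtendsOver f' A C {p'}ᶜ := by
  obtain ⟨G, hG, hGA, hGC⟩ := h
  obtain ⟨δ, hδ, hGδ⟩ :=
    exists_pos_forall_disjoint_ball hC hG.continuousOn isClosed_singleton hGC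
  refine ⟨δ / 2, half_pos hδ, fun f' hf' hff' p' hp' => ?_⟩
  have hp'G (x) (hx : x ∈ C) : p' ∉ ball (G x) (δ / 2) := fun hp'x => by
    refine disjoint_singleton_right.1 (hGδ x hx) ?_
    rw [mem_ball'] at hp'
    exact (dist_triangle p p' (G x)).trans_lt (by linarith [mem_ball.1 hp'x])
  refine .of_segment_subset hA isOpen_compl_singleton hf' hG
    (fun x hx hGx => hp'G x hx (hGx ▸ mem_ball_self (half_pos hδ))) fun x hx => ?_
  refine ((convex_ball (G x) (δ / 2)).segment_subset ?_ (mem_ball_self (half_pos hδ))).trans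
    (subset_compl_singleton_iff.2 (hp'G x (hAC hx)))
  simpa only [mem_ball, hGA hx] using hff' x hx

theorem extendsOver_compl_singleton_of_norm_le (hA : IsClosed A) (hf : ContinuousOn f A) {R : ℝ}
    (hR : 0 < R) (hfR : ∀ x ∈ A, ‖f x‖ ≤ R) (hp : R < ‖p‖) : ExtendsOver f A C {p}ᶜ := by
  obtain ⟨G, hG, hGA, hGR⟩ := exists_continuous_eqOn_norm_le_of_isClosed hA hf hR hfR
  exact ⟨G, hG, hGA, fun x _ hx => (hGR x).not_gt (mem_singleton_iff.1 hx ▸ hp)⟩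

/- Points far from the origin cause no trouble, so `p` ranges over a compact ball. -/
theorem exists_pos_forall_near_exists_extendsOver {ι : Type*} {s : Finset ι}
    {A C : ι → Set X} (hA : ∀ i ∈ s, IsClosed (A i)) (hC : ∀ i ∈ s, IsCompact (C i))
    (hAC : ∀ i ∈ s, A i ⊆ C i) (hf : ∀ i ∈ s, ContinuousOn f (A i))
    (h : ∀ p, ∃ i ∈ s, ExtendsOver f (A i) (C i) {p}ᶜ) :
    ∃ δ > 0, ∀ f' : X → E, (∀ i ∈ s, ContinuousOn f' (A i)) →
      (∀ i ∈ s, ∀ x ∈ A i, dist (f' x) (f x) < δ) →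
      ∀ p, ∃ i ∈ s, ExtendsOver f' (A i) (C i) {p}ᶜ := by
  obtain ⟨i₀, hi₀, -⟩ := h 0
  obtain ⟨R, hR, hfR⟩ := ((hC i₀ hi₀).of_isClosed_subset (hA i₀ hi₀) (hAC i₀ hi₀)
    |>.image_of_continuousOn (hf i₀ hi₀)).isBounded.exists_pos_norm_lt
  let Stable (δ : ℝ) (p : E) : Prop := ∀ f' : X → E, (∀ i ∈ s, ContinuousOn f' (A i)) →
    (∀ i ∈ s, ∀ x ∈ A i, dist (f' x) (f x) < δ) → ∃ i ∈ s, ExtendsOver f' (A i) (C i) {p}ᶜ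
  have hlocal : ∀ p ∈ closedBall (0 : E) (R + 1), ∀ᶠ z in 𝓝 ((0 : ℝ), p), Stable z.1 z.2 := by
    intro p _
    obtain ⟨i, hi, hip⟩ := h p
    obtain ⟨δ, hδ, hfδ⟩ := hip.exists_pos_forall_near (hA i hi) (hC i hi) (hAC i hi)
    filter_upwards [prod_mem_nhds (Iio_mem_nhds hδ) (ball_mem_nhds p hδ)] with z hz f' hf' hff'
    exact ⟨i, hi, hfδ f' (hf' i hi) (fun x hx => (hff' i hi x hx).trans hz.1) _ hz.2⟩
  obtain ⟨δ, hδ, hfδ⟩ := Metric.eventually_nhds_iff.1 <|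
    (isCompact_closedBall (0 : E) (R + 1)).eventually_forall_of_forall_eventually hlocal
  refine ⟨min (δ / 2) 1, by positivity, fun f' hf' hff' p => ?_⟩
  by_cases hp : p ∈ closedBall (0 : E) (R + 1)
  · have hδ2 : dist (δ / 2) 0 < δ := by rw [dist_zero_right, Real.norm_of_nonneg] <;> linarith
    exact hfδ hδ2 p hp f' hf' fun i hi x hx => (hff' i hi x hx).trans_le (min_le_left ..)
  · refine ⟨i₀, hi₀, extendsOver_compl_singleton_of_norm_le (hA i₀ hi₀) (hf' i₀ hi₀)
      (by positivity : 0 < R + 1) (fun x hx => ?_) (by simpa using hp)⟩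
    have hfx := hfR _ (mem_image_of_mem f hx)
    have hff'x := (hff' i₀ hi₀ x hx).trans_le (min_le_right ..)
    linarith [norm_le_norm_add_norm_sub' (f' x) (f x), dist_eq_norm (f' x) (f x)]

end Stability

section Perturbation

variable {V W : Type*} [NormedAddCommGroup V] [NormedSpace ℝ V] [FiniteDimensional ℝ V]
  [NormedAddCommGroup W] [NormedSpace ℝ W] [FiniteDimensional ℝ W]

theorem exists_continuous_near_mapsTo_compl_countable {φ : V → W} (hφ : Continuous φ) {C : Set V}
    (hC : dimH C < Module.finrank ℝ W) {P : Set W} (hP : P.Countable) {ε : ℝ} (hε : 0 < ε) :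
    ∃ ψ : V → W, Continuous ψ ∧ (∀ x, dist (ψ x) (φ x) < ε) ∧ MapsTo ψ C Pᶜ := by
  obtain ⟨ψ, hψ, hψφ, -⟩ := hφ.exists_contDiff_approx 1 (ε := fun _ => ε / 2) continuous_const
    (fun _ => half_pos hε)
  have hdim : dimH (⋃ p ∈ P, (fun x => p - ψ x) '' C) < Module.finrank ℝ W := by
    rw [dimH_bUnion hP]
    refine lt_of_le_of_lt (iSup₂_le fun p _ => ?_) hC
    exact (contDiff_const.sub hψ).contDiffOn.dimH_image_le convex_univ (subset_univ C)
  obtain ⟨c, hcε, hc⟩ := Metric.dense_iff.1 (dense_compl_of_dimH_lt_finrank hdim) 0 (ε / 2)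
    (half_pos hε)
  refine ⟨fun x => ψ x + c, hψ.continuous.add_const c, fun x => ?_, fun x hx hxP => ?_⟩
  · calc dist (ψ x + c) (φ x) ≤ dist (ψ x + c) (ψ x) + dist (ψ x) (φ x) := dist_triangle ..
      _ < ε / 2 + ε / 2 := add_lt_add (by simpa using hcε) (hψφ x)
      _ = ε := add_halves ε
  · exact hc (mem_biUnion hxP ⟨x, hx, add_sub_cancel_left ..⟩)

theorem exists_continuous_near_eqOn_mapsTo_compl_countable {φ : V → W} (hφ : Continuous φ)
    {C : Set V} (hC : dimH C < Module.finrank ℝ W) {P : Set W} (hP : P.Countable)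
    (hPc : IsCompact P) {A : Set V} (hA : IsCompact A) (hφA : MapsTo φ A Pᶜ) {ε : ℝ} (hε : 0 < ε) :
    ∃ ψ : V → W, Continuous ψ ∧ (∀ x, dist (ψ x) (φ x) < ε) ∧ EqOn ψ φ A ∧ MapsTo ψ C Pᶜ := by
  obtain ⟨r, hr, hrP⟩ := hPc.exists_cthickening_subset_open (hA.image hφ).isClosed.isOpen_compl
    fun y hy ⟨x, hx, hxy⟩ => hφA hx (hxy ▸ hy)
  obtain ⟨u, hu₀, hu₁, hu⟩ := exists_continuous_zero_one_of_isClosed hA.isClosed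
    ((isClosed_cthickening (δ := r) (E := P)).preimage hφ)
    (disjoint_left.2 fun x hxA hxP => hrP hxP (mem_image_of_mem φ hxA))
  obtain ⟨ψ, hψ, hψφ, hψC⟩ :=
    exists_continuous_near_mapsTo_compl_countable hφ hC hP (lt_min hε hr)
  have hnear (x) : dist (AffineMap.lineMap (φ x) (ψ x) (u x)) (φ x) < min ε r := by
    rw [dist_lineMap_left, Real.norm_of_nonneg (hu x).1, dist_comm]
    exact (mul_le_of_le_one_left dist_nonneg (hu x).2).trans_lt (hψφ x)
  refine ⟨fun x => AffineMap.lineMap (φ x) (ψ x) (u x), ?_,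
    fun x => (hnear x).trans_le (min_le_left ..), fun x hx => ?_, fun x hx hxP => ?_⟩
  · simp only [AffineMap.lineMap_apply_module]
    fun_prop
  · simp [hu₀ hx]
  · by_cases hxr : φ x ∈ cthickening r P
    · exact hψC hx (by simpa [hu₁ hxr] using hxP)
    · refine hxr (mem_cthickening_of_dist_le _ _ _ _ hxP ?_)
      exact (dist_comm (φ x) _).trans_le ((hnear x).le.trans (min_le_right ..))

end Perturbation

section Bridge

variable {W : Type*} [NormedAddCommGroup W] [NormedSpace ℝ W] {c t : ℝ} {x y p : ℝ × W}

/-- For `-1 ≤ t ≤ 2`, a path from `(min x.1 c, x.2)` to `(max y.1 c, y.2)`: first the height rises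
to `c`, then at height `c` the second component moves from `x.2` to `y.2`, and finally the height
rises above `c`. Hence points below height `c` are controlled by `x` alone and points above height
`c` by `y` alone. -/
def bridge (c t : ℝ) (x y : ℝ × W) : ℝ × W :=
  (c - t⁻ * (x.1 - c)⁻ + (t - 1)⁺ * (y.1 - c)⁺,
    AffineMap.lineMap x.2 y.2 (max 0 (min 1 t)))

theorem continuous_bridge (c : ℝ) :
    Continuous fun z : ℝ × (ℝ × W) × (ℝ × W) => bridge c z.1 z.2.1 z.2.2 := by
  simp only [bridge, posPart_def, negPart_def, AffineMap.lineMap_apply_module]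
  fun_prop

theorem bridge_self_snd : (bridge c t x x).2 = x.2 := by
  simp only [bridge, AffineMap.lineMap_same_apply]

theorem bridge_neg_one_fst : (bridge c (-1) x y).1 = min x.1 c := by
  rcases le_total x.1 c with h | h <;> norm_num [bridge, negPart_def, posPart_def, h]

theorem bridge_two_fst : (bridge c 2 x y).1 = max y.1 c := by
  rcases le_total y.1 c with h | h <;> norm_num [bridge, negPart_def, posPart_def, h]

theorem bridge_snd_of_fst_lt (h : (bridge c t x y).1 < c) : (bridge c t x y).2 = x.2 := by
  have ht : t < 0 := by
    by_contra! ht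
    rw [bridge, negPart_eq_zero.2 ht] at h
    linarith [mul_nonneg (posPart_nonneg (t - 1)) (posPart_nonneg (y.1 - c))]
  rw [bridge, max_eq_left (min_le_of_right_le ht.le), AffineMap.lineMap_apply_zero]

theorem bridge_snd_of_lt_fst (h : c < (bridge c t x y).1) : (bridge c t x y).2 = y.2 := by
  have ht : 1 < t := by
    by_contra! ht
    rw [bridge, posPart_eq_zero.2 (sub_nonpos.2 ht)] at h
    linarith [mul_nonneg (negPart_nonneg t) (negPart_nonneg (x.1 - c))]
  rw [bridge, min_eq_left ht.le, max_eq_right zero_le_one, AffineMap.lineMap_apply_one]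

theorem bridge_ne_of_fst_lt (hp : p.1 < c) (hx : x ≠ p) (ht : x.2 = p.2 → t = -1) :
    bridge c t x y ≠ p := by
  rintro rfl
  have hx₂ := (bridge_snd_of_fst_lt hp).symm
  obtain rfl := ht hx₂
  refine hx (Prod.ext ?_ hx₂)
  rw [bridge_neg_one_fst] at hp ⊢
  grind

theorem bridge_ne_of_lt_fst (hp : c < p.1) (hy : y ≠ p) (ht : y.2 = p.2 → t = 2) :
    bridge c t x y ≠ p := by
  rintro rfl
  have hy₂ := (bridge_snd_of_lt_fst hp).symm
  obtain rfl := ht hy₂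
  refine hy (Prod.ext ?_ hy₂)
  rw [bridge_two_fst] at hp ⊢
  grind

theorem mem_segment_bridge_self (h : p ∈ segment ℝ x (bridge c t x x)) :
    p.1 ∈ uIcc x.1 (bridge c t x x).1 ∧ p.2 = x.2 := by
  obtain ⟨hp₁, hp₂⟩ := Prod.segment_subset _ _ h
  rw [segment_eq_uIcc] at hp₁
  rw [bridge_self_snd, segment_same] at hp₂
  exact ⟨hp₁, hp₂⟩

theorem notMem_segment_bridge_self_of_fst_lt (hp : p.1 < c) (hx : x ≠ p) (ht : x.2 = p.2 → t = -1) :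
    p ∉ segment ℝ x (bridge c t x x) := fun h => by
  obtain ⟨hp₁, hp₂⟩ := mem_segment_bridge_self h
  obtain rfl := ht hp₂.symm
  rw [bridge_neg_one_fst, mem_uIcc] at hp₁
  refine hx (Prod.ext ?_ hp₂.symm)
  grind

theorem notMem_segment_bridge_self_of_lt_fst (hp : c < p.1) (hx : x ≠ p) (ht : x.2 = p.2 → t = 2) :
    p ∉ segment ℝ x (bridge c t x x) := fun h => by
  obtain ⟨hp₁, hp₂⟩ := mem_segment_bridge_self h
  obtain rfl := ht hp₂.symm
  rw [bridge_two_fst, mem_uIcc] at hp₁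
  refine hx (Prod.ext ?_ hp₂.symm)
  grind

end Bridge

section AvoidingFinite

variable {V W : Type*} [NormedAddCommGroup V] [NormedSpace ℝ V] [FiniteDimensional ℝ V]
  [NormedAddCommGroup W] [NormedSpace ℝ W] [FiniteDimensional ℝ W] {A C : Set V}

/- A perturbation of the pair of second components `V → W × W` misses `{p.2} × Q.2`. -/
theorem exists_continuous_mapsTo_snd_notMem (hC : IsCompact C) (hA : IsClosed A) (hAC : A ⊆ C)
    (hdim : dimH C < 2 * Module.finrank ℝ W) {p : ℝ × W} {Q : Set (ℝ × W)} (hQ : Q.Finite)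
    (hpQ : p.2 ∉ Prod.snd '' Q) {G H : V → ℝ × W} (hG : Continuous G) (hH : Continuous H)
    (hGH : EqOn G H A) (hHp : MapsTo H C {p}ᶜ) (hGQ : MapsTo G C Qᶜ) :
    ∃ G' H' : V → ℝ × W, Continuous G' ∧ Continuous H' ∧ EqOn G' G A ∧ EqOn H' G A ∧
      MapsTo H' C {p}ᶜ ∧ MapsTo G' C Qᶜ ∧
      ∀ x ∈ C, (H' x).2 = p.2 → (G' x).2 ∉ Prod.snd '' Q := by
  obtain ⟨δ, hδ, hHδ⟩ :=
    exists_pos_forall_disjoint_ball hC hH.continuousOn isClosed_singleton hHp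
  obtain ⟨δ', hδ', hGδ⟩ := exists_pos_forall_disjoint_ball hC hG.continuousOn hQ.isClosed hGQ
  have hP : (({p.2} : Set W) ×ˢ (Prod.snd '' Q)).Finite := (finite_singleton _).prod (hQ.image _)
  have hPA (x) (hx : x ∈ A) : ((H x).2, (G x).2) ∉ ({p.2} : Set W) ×ˢ (Prod.snd '' Q) := by
    rintro ⟨hxp : (H x).2 = p.2, hxQ⟩
    exact hpQ (hxp ▸ hGH hx ▸ hxQ)
  obtain ⟨ψ, hψ, hψδ, hψA, hψC⟩ := exists_continuous_near_eqOn_mapsTo_compl_countable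
    (φ := fun x => ((H x).2, (G x).2)) (by fun_prop) (C := C)
    (by rwa [Module.finrank_prod, ← two_mul, Nat.cast_mul]) hP.countable hP.isCompact
    (hC.of_isClosed_subset hA hAC) (fun x hx => hPA x hx) (lt_min hδ hδ')
  refine ⟨fun x => ((G x).1, (ψ x).2), fun x => ((H x).1, (ψ x).1), by fun_prop, by fun_prop,
    fun x hx => by simp only [hψA hx], fun x hx => by simp only [hψA hx, ← hGH hx], fun x hx => ?_,
    fun x hx => ?_, fun x hx hxp hxQ => hψC hx ⟨hxp, hxQ⟩⟩
  · refine (hHδ x hx).notMem_of_mem_left (mem_ball.2 ?_)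
    rw [Prod.dist_eq, dist_self, max_eq_right dist_nonneg]
    exact (le_max_left _ _).trans_lt ((hψδ x).trans_le (min_le_left ..))
  · refine (hGδ x hx).notMem_of_mem_left (mem_ball.2 ?_)
    rw [Prod.dist_eq, dist_self, max_eq_right dist_nonneg]
    exact (le_max_right _ _).trans_lt ((hψδ x).trans_le (min_le_right ..))

theorem ExtendsOver.compl_insert (hC : IsCompact C) (hA : IsClosed A) (hAC : A ⊆ C)
    (hdim : dimH C < 2 * Module.finrank ℝ W) {f : V → ℝ × W} {p : ℝ × W} {Q : Set (ℝ × W)}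
    (hQ : Q.Finite) {c : ℝ} (hpc : p.1 < c) (hcQ : ∀ q ∈ Q, c < q.1) (hpQ : p.2 ∉ Prod.snd '' Q)
    (hfp : ExtendsOver f A C {p}ᶜ) (hfQ : ExtendsOver f A C Qᶜ) :
    ExtendsOver f A C (insert p Q)ᶜ := by
  obtain ⟨H₀, hH₀, hH₀A, hH₀p⟩ := hfp
  obtain ⟨G₀, hG₀, hG₀A, hG₀Q⟩ := hfQ
  obtain ⟨G, H, hG, hH, hGA, hHA, hHp, hGQ, hHG⟩ := exists_continuous_mapsTo_snd_notMem hC hA hAC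
    hdim hQ hpQ hG₀ hH₀ (hG₀A.trans hH₀A.symm) hH₀p hG₀Q
  obtain ⟨τ, hτp, hτQ, -⟩ := exists_bounded_mem_Icc_of_closed_of_le
    (s := C ∩ {x | (H x).2 = p.2}) (t := C ∩ (fun x => (G x).2) ⁻¹' (Prod.snd '' Q))
    (hC.isClosed.inter (isClosed_eq (by fun_prop) continuous_const))
    (hC.isClosed.inter ((hQ.image _).isClosed.preimage (by fun_prop)))
    (disjoint_left.2 fun x hx hx' => hHG x hx.1 hx.2 hx'.2) (by norm_num : (-1 : ℝ) ≤ 2)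
  have hτp' (x) (hx : x ∈ C) : (H x).2 = p.2 → τ x = -1 := fun h => hτp ⟨hx, h⟩
  have hτQ' (q) (hq : q ∈ Q) (x) (hx : x ∈ C) : (G x).2 = q.2 → τ x = 2 := fun h =>
    hτQ ⟨hx, q, hq, h.symm⟩
  refine .congr (f := G) (.of_segment_subset hA (hQ.insert p).isClosed.isOpen_compl hG.continuousOn
    ((continuous_bridge c).comp (by fun_prop : Continuous fun x => (τ x, H x, G x)))
    ?_ fun x hx => ?_) (hGA.trans hG₀A)
  · rintro x hx (hxp | hxQ)
    · exact bridge_ne_of_fst_lt hpc (hHp hx) (hτp' x hx) hxp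
    · exact bridge_ne_of_lt_fst (hcQ _ hxQ) (ne_of_mem_of_not_mem hxQ (hGQ hx)).symm
        (hτQ' _ hxQ x hx) rfl
  · have hxC := hAC hx
    have hHx : H x = G x := (hHA hx).trans (hGA hx).symm
    simp only [Function.comp_apply, hHx]
    rintro z hz (rfl | hzQ)
    · exact notMem_segment_bridge_self_of_fst_lt hpc (hHx ▸ hHp hxC) (hHx ▸ hτp' x hxC) hz
    · exact notMem_segment_bridge_self_of_lt_fst (hcQ z hzQ)
        (ne_of_mem_of_not_mem hzQ (hGQ hxC)).symm (hτQ' z hzQ x hxC) hz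

theorem extendsOver_compl_finset_prod (hC : IsCompact C) (hA : IsClosed A) (hAC : A ⊆ C)
    (hdim : dimH C < 2 * Module.finrank ℝ W) {f : V → ℝ × W} (hf : ContinuousOn f A)
    (Q : Finset (ℝ × W)) (hQ₁ : InjOn Prod.fst (Q : Set (ℝ × W)))
    (hQ₂ : InjOn Prod.snd (Q : Set (ℝ × W))) (h : ∀ q ∈ Q, ExtendsOver f A C {q}ᶜ) :
    ExtendsOver f A C (Q : Set (ℝ × W))ᶜ := by
  classical
  induction Q using Finset.induction_on_min_value fun q : ℝ × W => q.1 with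
  | empty =>
    obtain ⟨G, hG, hGA⟩ := exists_continuous_eqOn_of_isClosed hA hf
    exact ⟨G, hG, hGA, by simp⟩
  | insert p Q hp hmin ih =>
    rw [Finset.coe_insert] at hQ₁ hQ₂ ⊢
    have hpQ : ∀ q ∈ Q, p.1 < q.1 := fun q hq => (hmin q hq).lt_of_ne fun hpq =>
      hp (hQ₁ (mem_insert _ _) (mem_insert_of_mem _ hq) hpq ▸ hq)
    obtain ⟨c, hpc, hcQ⟩ :=
      Order.exists_between_finsets {p.1} (Q.image Prod.fst) (by simpa using hpQ)
    refine .compl_insert hC hA hAC hdim Q.finite_toSet (hpc _ (Finset.mem_singleton_self _))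
      (fun q hq => hcQ _ (Finset.mem_image_of_mem _ hq)) ?_ (h p (Finset.mem_insert_self ..))
      (ih (hQ₁.mono (subset_insert ..)) (hQ₂.mono (subset_insert ..)) fun q hq =>
        h q (Finset.mem_insert_of_mem hq))
    rintro ⟨q, hq, hqp⟩
    exact hp (hQ₂ (mem_insert_of_mem _ hq) (mem_insert _ _) hqp ▸ hq)

end AvoidingFinite

section Splitting

variable {E : Type*} [NormedAddCommGroup E] [NormedSpace ℝ E] {Q : Set E}

theorem exists_dual_injOn (hQ : Q.Finite) : ∃ ℓ : Module.Dual ℝ E, InjOn ℓ Q := by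
  have := hQ.offDiag.to_subtype
  obtain ⟨ℓ, hℓ⟩ := Module.exists_dual_forall_apply_ne_zero (K := ℝ)
    (fun z : Q.offDiag => z.1.1 - z.1.2) fun z => sub_ne_zero.2 z.2.2.2
  refine ⟨ℓ, fun x hx y hy hxy => ?_⟩
  by_contra hne
  exact hℓ ⟨(x, y), hx, hy, hne⟩ (by simp [hxy])

theorem exists_isCompl_span_singleton_injOn_projectionOnto (hE : 2 ≤ Module.finrank ℝ E)
    {W : Submodule ℝ E} (hW : IsCoatom W) (hQ : Q.Finite) :
    ∃ (e : E) (h : IsCompl W (ℝ ∙ e)), InjOn (W.projectionOnto (ℝ ∙ e) h) Q := by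
  have := hQ.offDiag.to_subtype
  have hspan (v : E) : ℝ ∙ v ≠ ⊤ := fun h => by
    have hle := finrank_span_le_card (R := ℝ) ({v} : Set E)
    rw [h, finrank_top, toFinset_singleton, Finset.card_singleton] at hle
    omega
  obtain ⟨e, he⟩ := Submodule.exists_forall_notMem_of_forall_ne_top
    (fun z : Option Q.offDiag => z.elim W fun z => ℝ ∙ (z.1.1 - z.1.2))
    (by rintro (_ | z); exacts [hW.1, hspan _])
  refine ⟨e, Submodule.isCompl_span_singleton_of_isCoatom_of_notMem hW (he none),
    fun x hx y hy hxy => ?_⟩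
  rw [← sub_eq_zero, ← map_sub, Submodule.projectionOnto_apply_eq_zero_iff,
    Submodule.mem_span_singleton] at hxy
  obtain ⟨a, ha⟩ := hxy
  by_contra hne
  have ha₀ : a ≠ 0 := by
    rintro rfl
    exact sub_ne_zero.2 hne (by rw [← ha, zero_smul])
  exact he (some ⟨(x, y), hx, hy, hne⟩) (Submodule.mem_span_singleton.2
    ⟨a⁻¹, by rw [← ha, inv_smul_smul₀ ha₀]⟩)

theorem exists_continuousLinearEquiv_prod_injOn [FiniteDimensional ℝ E]
    (hE : 2 ≤ Module.finrank ℝ E) (hQ : Q.Finite) :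
    ∃ (W : Submodule ℝ E) (Θ : E ≃L[ℝ] ℝ × W),
      InjOn (fun x => (Θ x).1) Q ∧ InjOn (fun x => (Θ x).2) Q := by
  have : Nontrivial E := Module.nontrivial_of_finrank_pos (R := ℝ) (by omega)
  obtain ⟨e₀, he₀⟩ := exists_ne (0 : E)
  obtain ⟨ℓ, hℓ⟩ := exists_dual_injOn (hQ.union (toFinite {0, e₀}))
  have hℓ₀ : ℓ ≠ 0 := by
    rintro rfl
    exact he₀ (hℓ (by simp) (by simp) (by simp))
  obtain ⟨e, he, heQ⟩ := exists_isCompl_span_singleton_injOn_projectionOnto hE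
    (LinearMap.isCoatom_ker_of_surjective (LinearMap.surjective hℓ₀)) hQ
  exact ⟨LinearMap.ker ℓ, (ℓ.equivProdOfSurjectiveOfIsCompl _ (LinearMap.range_eq_top.2
    (LinearMap.surjective hℓ₀)) (Submodule.range_projectionOnto _)
    (by rwa [Submodule.ker_projectionOnto])).toContinuousLinearEquiv,
    hℓ.mono subset_union_left, heQ⟩

theorem extendsOver_compl_finset {V : Type*} [NormedAddCommGroup V] [NormedSpace ℝ V]
    [FiniteDimensional ℝ V] [FiniteDimensional ℝ E] (hE : 3 ≤ Module.finrank ℝ E) {A C : Set V}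
    (hC : IsCompact C) (hA : IsClosed A) (hAC : A ⊆ C) (hdim : dimH C ≤ Module.finrank ℝ E)
    {f : V → E} (hf : ContinuousOn f A) (Q : Finset E) (h : ∀ p ∈ Q, ExtendsOver f A C {p}ᶜ) :
    ExtendsOver f A C (Q : Set E)ᶜ := by
  classical
  obtain ⟨W, Θ, hΘ₁, hΘ₂⟩ := exists_continuousLinearEquiv_prod_injOn (by omega) Q.finite_toSet
  have hW : Module.finrank ℝ E = 1 + Module.finrank ℝ W := by
    rw [Θ.toLinearEquiv.finrank_eq, Module.finrank_prod, Module.finrank_self]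
  have hΘ (s : Set E) : ExtendsOver (Θ ∘ f) A C (Θ '' s)ᶜ ↔ ExtendsOver f A C sᶜ := by
    rw [← image_compl_eq Θ.bijective]
    exact extendsOver_homeomorph_comp_iff Θ.toHomeomorph
  have hQ := extendsOver_compl_finset_prod hC hA hAC (hdim.trans_lt (mod_cast by omega))
    (Θ.continuous.comp_continuousOn hf) (Q.image Θ)
  rw [Finset.coe_image, hΘ] at hQ
  refine hQ hΘ₁.image_of_comp hΘ₂.image_of_comp (Finset.forall_mem_image.2 fun p hp => ?_)
  rw [← image_singleton, hΘ]
  exact h p hp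

end Splitting

section RegularZeros

variable {D T : Type*} [NormedAddCommGroup D] [NormedSpace ℝ D] [NormedAddCommGroup T]
  [NormedSpace ℝ T]

/-- Every zero of `g` in `K` is regular, in the sense that the derivative of `g` there is
invertible. In particular `g` has no zero in `K` if `D` and `T` have different dimensions; so for
`dim D ≤ dim T` this says that `g` is transverse to `0` along `K`. -/
def HasRegularZerosOn (g : D → T) (K : Set D) : Prop :=
  ∀ x ∈ K, g x = 0 → (fderiv ℝ g x).IsInvertible

theorem HasRegularZerosOn.inter_preimage_zero_eq_empty {g : D → T} {K : Set D}
    (h : HasRegularZerosOn g K) (hDT : Module.finrank ℝ D ≠ Module.finrank ℝ T) :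
    K ∩ g ⁻¹' {0} = ∅ := by
  refine eq_empty_of_forall_notMem fun x ⟨hxK, hx⟩ => ?_
  obtain ⟨e, -⟩ := h x hxK hx
  exact hDT e.toLinearEquiv.finrank_eq

theorem HasRegularZerosOn.finite_inter_preimage_zero {g : D → T} {K : Set D}
    (h : HasRegularZerosOn g K) (hg : Differentiable ℝ g) (hK : IsCompact K) :
    (K ∩ g ⁻¹' {0}).Finite := by
  refine (hK.inter_right (isClosed_singleton.preimage hg.continuous)).finite
    (isDiscrete_iff_nhdsNE.2 fun x ⟨hxK, hx⟩ => ?_)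
  obtain ⟨e, he⟩ := h x hxK hx
  have hgx : HasFDerivAt g (e : D →L[ℝ] T) x := he ▸ (hg x).hasFDerivAt
  have hne : ∀ᶠ y in 𝓝[≠] x, g y ≠ 0 := hgx.eventually_ne ⟨_, e.antilipschitz⟩
  rw [inf_principal_eq_bot]
  exact hne.mono fun y hy hyK => hy hyK.2

theorem isOpen_setOf_hasRegularZerosOn {A : Type*} [NormedAddCommGroup A] [NormedSpace ℝ A]
    [CompleteSpace D] {Ψ : A → D → T}
    (hΨ : ContDiff ℝ 1 (Function.uncurry Ψ)) {K : Set D} (hK : IsCompact K) :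
    IsOpen {a | HasRegularZerosOn (Ψ a) K} := by
  have hfderiv : Continuous fun z : A × D => fderiv ℝ (Ψ z.1) z.2 :=
    contDiff_zero.1 (ContDiff.fderiv (n := 0) (m := 1) (f := fun (z : A × D) y => Ψ z.1 y)
      (hΨ.comp ((contDiff_fst.comp contDiff_fst).prodMk contDiff_snd)) contDiff_snd (by simp))
  let P (a : A) (x : D) : Prop := Ψ a x = 0 → (fderiv ℝ (Ψ a) x).IsInvertible
  have hP : IsOpen {z : A × D | P z.1 z.2} := by
    simp only [P, imp_iff_not_or]
    exact (isOpen_ne_fun hΨ.continuous continuous_const).union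
      (ContinuousLinearEquiv.isOpen.preimage hfderiv)
  exact isOpen_iff_eventually.2 fun a ha => hK.eventually_forall_of_forall_eventually (P := P)
    fun x hx => hP.mem_nhds (ha x hx)

theorem dense_setOf_forall_eq_imp_isInvertible_fderiv [FiniteDimensional ℝ D]
    [FiniteDimensional ℝ T] {g : D → T} (hg : ContDiff ℝ 1 g)
    (hDT : Module.finrank ℝ D ≤ Module.finrank ℝ T) :
    Dense {y | ∀ x, g x = y → (fderiv ℝ g x).IsInvertible} := by
  rcases hDT.lt_or_eq with hlt | heq
  · exact (hg.dense_compl_range_of_finrank_lt_finrank hlt).mono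
      fun y hy x hx => (hy ⟨x, hx⟩).elim
  let e : T ≃L[ℝ] D := ContinuousLinearEquiv.ofFinrankEq heq.symm
  borelize D
  let f' (x : D) : D →L[ℝ] D := e ∘L fderiv ℝ g x
  have hf' (x : D) : HasFDerivAt (e ∘ g) (f' x) x :=
    e.hasFDerivAt.comp x (hg.differentiable one_ne_zero x).hasFDerivAt
  have hcrit : MeasureTheory.Measure.addHaar (e ∘ g '' {x | (f' x).det = 0}) = 0 :=
    MeasureTheory.addHaar_image_eq_zero_of_det_fderivWithin_eq_zero _
      (fun x _ => (hf' x).hasFDerivWithinAt) fun x hx => hx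
  have hdense : Dense (e ∘ g '' {x | (f' x).det = 0})ᶜ :=
    MeasureTheory.Measure.dense_of_ae (MeasureTheory.measure_eq_zero_iff_ae_notMem.1 hcrit)
  refine (hdense.preimage e.toHomeomorph.isOpenMap).mono fun y hy x hx => ?_
  have hdet : (f' x).det ≠ 0 := fun h => hy ⟨x, h, congrArg e hx⟩
  rw [← ContinuousLinearMap.isInvertible_equiv_comp (e := e)]
  exact ⟨_, (f' x).coe_toContinuousLinearEquivOfDetNeZero hdet⟩

theorem dense_setOf_hasRegularZerosOn {A : Type*} [TopologicalSpace A] [FiniteDimensional ℝ D]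
    [FiniteDimensional ℝ T] (hDT : Module.finrank ℝ D ≤ Module.finrank ℝ T) {Ψ : A → D → T}
    (hΨ : ∀ a, ContDiff ℝ 1 (Ψ a)) (K : Set D)
    (htranslate : ∀ a, ∃ β : T → A, Continuous β ∧ β 0 = a ∧ ∀ b x, Ψ (β b) x = Ψ a x + b) :
    Dense {a | HasRegularZerosOn (Ψ a) K} := by
  intro a
  obtain ⟨β, hβ, rfl, hΨβ⟩ := htranslate a
  have hdense := (dense_setOf_forall_eq_imp_isInvertible_fderiv (hΨ (β 0)) hDT).preimage
    (Homeomorph.neg T).isOpenMap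
  refine map_mem_closure hβ (hdense 0) fun b hb x _ hx => ?_
  rw [hΨβ] at hx
  rw [funext (hΨβ b), fderiv_add_const]
  exact hb x (eq_neg_of_add_eq_zero_left hx)

end RegularZeros

section GeneralPosition

variable {ι V E : Type*} [NormedAddCommGroup V] [NormedSpace ℝ V] [NormedAddCommGroup E]
  [NormedSpace ℝ E] {D : ι → Type*}

/-- The map whose zeros are the coincidences of the perturbed pieces `(F + ⇑a) ∘ ρ i`, measured
against the piece `i₀`. -/
def coincidenceDefect (F : V → E) (ρ : ∀ i, D i → V) (i₀ : ι) (a : V →L[ℝ] E) (z : ∀ i, D i)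
    (i : {i // i ≠ i₀}) : E :=
  (F + ⇑a) (ρ i (z i)) - (F + ⇑a) (ρ i₀ (z i₀))

theorem iInter_image_subset_image_coincidenceDefect_eq_zero {F : V → E} {ρ : ∀ i, D i → V}
    {K : ∀ i, Set (D i)} (i₀ : ι) (a : V →L[ℝ] E) :
    ⋂ i, (F + ⇑a) '' (ρ i '' K i) ⊆
      (fun z => (F + ⇑a) (ρ i₀ (z i₀))) '' (univ.pi K ∩ coincidenceDefect F ρ i₀ a ⁻¹' {0}) := by
  intro p hp
  choose z hzK hzp using fun i => image_image (F + ⇑a) (ρ i) (K i) ▸ mem_iInter.1 hp i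
  refine ⟨z, ⟨fun i _ => hzK i, funext fun i => ?_⟩, hzp i₀⟩
  exact sub_eq_zero.2 ((hzp i).trans (hzp i₀).symm)

/- Perturbing by `∑ i, b i • ℓ i` moves the piece `i` by `b i`. -/
theorem exists_continuous_coincidenceDefect_eq_add [Finite ι] [DecidableEq ι] {F : V → E}
    {ρ : ∀ i, D i → V} {ℓ : V →L[ℝ] ι → ℝ} (hℓ : ∀ i z, ℓ (ρ i z) = Pi.single i 1) (i₀ : ι)
    (a : V →L[ℝ] E) :
    ∃ β : ({i // i ≠ i₀} → E) → V →L[ℝ] E, Continuous β ∧ β 0 = a ∧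
      ∀ b z, coincidenceDefect F ρ i₀ (β b) z = coincidenceDefect F ρ i₀ a z + b := by
  have := Fintype.ofFinite ι
  let L (i : {i // i ≠ i₀}) : V →L[ℝ] ℝ := ContinuousLinearMap.proj (i : ι) ∘L ℓ
  refine ⟨fun b => a + ∑ i, (L i).smulRight (b i), ?_, by simp, fun b z => funext fun i => ?_⟩
  · exact continuous_const.add (continuous_finsetSum _ fun i _ =>
      (ContinuousLinearMap.smulRightL ℝ V E (L i)).continuous.comp (continuous_apply i))
  · have hi : ∑ j, L j (ρ i (z i)) • b j = b i := by
      rw [Finset.sum_eq_single i]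
      · simp [L, hℓ]
      · intro j _ hji
        simp [L, hℓ, Subtype.coe_ne_coe.2 hji]
      · simp
    have hi₀ : ∑ j, L j (ρ i₀ (z i₀)) • b j = 0 := by
      refine Finset.sum_eq_zero fun j _ => ?_
      simp [L, hℓ, j.2]
    simp only [coincidenceDefect, Pi.add_apply, add_apply, sum_apply,
      ContinuousLinearMap.smulRight_apply, hi, hi₀]
    abel

variable [Fintype ι] [DecidableEq ι] [∀ i, NormedAddCommGroup (D i)] [∀ i, NormedSpace ℝ (D i)]

theorem contDiff_coincidenceDefect {F : V → E} (hF : ContDiff ℝ 1 F) {ρ : ∀ i, D i → V}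
    (hρ : ∀ i, ContDiff ℝ 1 (ρ i)) (i₀ : ι) :
    ContDiff ℝ 1 (Function.uncurry (coincidenceDefect F ρ i₀)) := by
  have hpiece (i : ι) :
      ContDiff ℝ 1 fun x : (V →L[ℝ] E) × ∀ i, D i => (F + ⇑x.1) (ρ i (x.2 i)) := by
    have hρi : ContDiff ℝ 1 fun x : (V →L[ℝ] E) × ∀ i, D i => ρ i (x.2 i) :=
      (hρ i).comp (contDiff_pi.1 contDiff_snd i)
    exact (hF.comp hρi).add (contDiff_fst.clm_apply hρi)
  exact contDiff_pi.2 fun i => (hpiece i).sub (hpiece i₀)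

theorem exists_isOpen_dense_iInter_image_finite [FiniteDimensional ℝ E] [Nonempty ι]
    [∀ i, FiniteDimensional ℝ (D i)]
    {F : V → E} (hF : ContDiff ℝ 1 F) {ρ : ∀ i, D i → V} (hρ : ∀ i, ContDiff ℝ 1 (ρ i))
    {K : ∀ i, Set (D i)} (hK : ∀ i, IsCompact (K i)) {ℓ : V →L[ℝ] ι → ℝ}
    (hℓ : ∀ i z, ℓ (ρ i z) = Pi.single i 1)
    (hdim : ∑ i, Module.finrank ℝ (D i) ≤ (Fintype.card ι - 1) * Module.finrank ℝ E) :
    ∃ O : Set (V →L[ℝ] E), IsOpen O ∧ Dense O ∧ ∀ a ∈ O,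
      (⋂ i, (F + ⇑a) '' (ρ i '' K i)).Finite ∧
      (∑ i, Module.finrank ℝ (D i) < (Fintype.card ι - 1) * Module.finrank ℝ E →
        ⋂ i, (F + ⇑a) '' (ρ i '' K i) = ∅) := by
  obtain ⟨i₀⟩ := ‹Nonempty ι›
  have hdimD : Module.finrank ℝ (∀ i, D i) = ∑ i, Module.finrank ℝ (D i) :=
    Module.finrank_pi_fintype ℝ
  have hdimT : Module.finrank ℝ ({i // i ≠ i₀} → E) =
      (Fintype.card ι - 1) * Module.finrank ℝ E := by
    simp [Module.finrank_pi_fintype]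
  have hΨ := contDiff_coincidenceDefect hF hρ i₀
  have hΨa (a : V →L[ℝ] E) : ContDiff ℝ 1 (coincidenceDefect F ρ i₀ a) :=
    hΨ.comp (contDiff_prodMk_right a)
  have hKc := isCompact_univ_pi hK
  refine ⟨{a | HasRegularZerosOn (coincidenceDefect F ρ i₀ a) (univ.pi K)},
    isOpen_setOf_hasRegularZerosOn hΨ hKc, dense_setOf_hasRegularZerosOn (by rwa [hdimD, hdimT])
      hΨa _ (exists_continuous_coincidenceDefect_eq_add hℓ i₀), fun a ha => ⟨?_, fun hlt => ?_⟩⟩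
  · exact ((ha.finite_inter_preimage_zero ((hΨa a).differentiable one_ne_zero) hKc).image _).subset
      (iInter_image_subset_image_coincidenceDefect_eq_zero i₀ a)
  · rw [← hdimD, ← hdimT] at hlt
    rw [← subset_empty_iff, ← image_empty, ← ha.inter_preimage_zero_eq_empty hlt.ne]
    exact iInter_image_subset_image_coincidenceDefect_eq_zero i₀ a

end GeneralPosition

section Faces

variable {N k : ℕ} {S T : Finset (Fin (N + 1))}

theorem isCompact_stdSimp (N : ℕ) : IsCompact (stdSimp N) :=
  isCompact_stdSimplex ℝ (Fin (N + 1))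

theorem isCompact_simpFace (S : Finset (Fin (N + 1))) : IsCompact (simpFace S) := by
  have hS : simpFace S = stdSimp N ∩ ⋂ i ∉ S, {x | x i = 0} := by
    ext x
    simp only [simpFace, mem_ofPred_eq, mem_inter_iff, mem_iInter]
  rw [hS]
  exact (isCompact_stdSimp N).inter_right
    (isClosed_biInter fun i _ => isClosed_eq (continuous_apply i) continuous_const)

theorem isClosed_simpFaceBoundary (S : Finset (Fin (N + 1))) : IsClosed (simpFaceBoundary S) := by
  have hS : simpFaceBoundary S = simpFace S ∩ ⋃ i ∈ S, {x | x i = 0} := by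
    ext x
    simp only [simpFaceBoundary, mem_ofPred_eq, mem_inter_iff, mem_iUnion, exists_prop]
  rw [hS]
  exact (isCompact_simpFace S).isClosed.inter (S.finite_toSet.isClosed_biUnion fun i _ =>
    isClosed_eq (continuous_apply i) continuous_const)

theorem convex_simpFace (S : Finset (Fin (N + 1))) : Convex ℝ (simpFace S) := by
  rintro x ⟨hx, hxS⟩ y ⟨hy, hyS⟩ a b ha hb hab
  refine ⟨convex_stdSimplex ℝ (Fin (N + 1)) hx hy ha hb hab, fun i hi => ?_⟩
  simp [hxS i hi, hyS i hi]

theorem simpFace_nonempty (hS : S.Nonempty) : (simpFace S).Nonempty := by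
  obtain ⟨v, hv⟩ := hS
  exact ⟨Pi.single v 1, single_mem_stdSimplex ℝ v,
    fun i hi => Pi.single_eq_of_ne (ne_of_mem_of_not_mem hv hi).symm _⟩

theorem sum_eq_one_of_mem_simpFace {x : Fin (N + 1) → ℝ} (hx : x ∈ simpFace S) :
    ∑ i ∈ S, x i = 1 := by
  rw [← hx.1.2]
  exact Finset.sum_subset (Finset.subset_univ S) fun i _ hi => hx.2 i hi

theorem simpFace_inter (S T : Finset (Fin (N + 1))) :
    simpFace S ∩ simpFace T = simpFace (S ∩ T) := by
  ext x
  refine ⟨fun ⟨hxS, hxT⟩ => ⟨hxS.1, fun i hi => ?_⟩, fun hx => ⟨⟨hx.1, fun i hi => ?_⟩,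
    ⟨hx.1, fun i hi => ?_⟩⟩⟩
  · by_cases hiS : i ∈ S
    · exact hxT.2 i fun hiT => hi (Finset.mem_inter.2 ⟨hiS, hiT⟩)
    · exact hxS.2 i hiS
  · exact hx.2 i fun h => hi (Finset.mem_inter.1 h).1
  · exact hx.2 i fun h => hi (Finset.mem_inter.1 h).2

theorem skel_eq_biUnion_simpFace (N k : ℕ) :
    skel N k = ⋃ S ∈ {S : Finset (Fin (N + 1)) | S.card ≤ k + 1}, simpFace S := by
  ext x
  simp only [skel, mem_ofPred_eq, mem_iUnion, exists_prop]
  refine ⟨fun ⟨hx, hk⟩ => ⟨Finset.univ.filter fun i => x i ≠ 0, ?_, hx,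
    fun i hi => by simpa using hi⟩, fun ⟨S, hS, hx⟩ => ⟨hx.1, le_trans ?_ hS⟩⟩
  · rwa [← ncard_coe_finset, Finset.coe_filter_univ]
  · rw [← ncard_coe_finset S]
    exact ncard_le_ncard fun i hi => by_contra fun hiS => hi (hx.2 i hiS)

theorem isCompact_skel (N k : ℕ) : IsCompact (skel N k) := by
  rw [skel_eq_biUnion_simpFace]
  exact (toFinite _).isCompact_biUnion fun S _ => isCompact_simpFace S

theorem simpFace_subset_skel (hS : S.card ≤ k + 1) : simpFace S ⊆ skel N k := by
  rw [skel_eq_biUnion_simpFace]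
  exact subset_biUnion_of_mem (u := simpFace) hS

theorem simpFace_inter_simpFace_subset_skel (hS : S.card = k + 2) (hT : T.card = k + 2)
    (hST : S ≠ T) : simpFace S ∩ simpFace T ⊆ skel N k := by
  have hne : S ∩ T ≠ S := fun h =>
    hST (Finset.eq_of_subset_of_card_le (Finset.inter_eq_left.1 h) (hT.trans_le hS.ge))
  rw [simpFace_inter]
  refine simpFace_subset_skel (Nat.le_of_lt_succ ?_)
  exact (Finset.card_lt_card (Finset.inter_subset_left.ssubset_of_ne hne)).trans_eq hS

theorem simpFace_inter_skel_of_card_eq (hS : S.card = k + 2) :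
    simpFace S ∩ skel N k = simpFaceBoundary S := by
  refine Subset.antisymm (fun x ⟨hxS, hx⟩ => ⟨hxS, ?_⟩) fun x ⟨hxS, i, hi, hxi⟩ => ⟨hxS, ?_⟩
  · rw [skel_eq_biUnion_simpFace] at hx
    obtain ⟨T, hT, hxT⟩ := mem_iUnion₂.1 hx
    obtain ⟨i, hiS, hiT⟩ := Finset.exists_mem_notMem_of_card_lt_card
      (lt_of_le_of_lt hT (by rw [hS]; exact Nat.lt_succ_self _))
    exact ⟨i, hiS, hxT.2 i hiT⟩
  · have hcard : (S.erase i).card ≤ k + 1 := by rw [Finset.card_erase_of_mem hi, hS]; rfl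
    refine simpFace_subset_skel hcard ⟨hxS.1, fun j hj => ?_⟩
    rcases eq_or_ne j i with rfl | hji
    · exact hxi
    · exact hxS.2 j fun hjS => hj (Finset.mem_erase.2 ⟨hji, hjS⟩)

/-- The affine chart of the plane spanned by `σ_S` that forgets the coordinate of the vertex
`v ∈ S`. -/
def faceChart (S : Finset (Fin (N + 1))) (v : Fin (N + 1)) (z : ↥(S.erase v) → ℝ) :
    Fin (N + 1) → ℝ :=
  Pi.single v 1 + ∑ u, z u • (Pi.single (u : Fin (N + 1)) 1 - Pi.single v 1 : Fin (N + 1) → ℝ)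

theorem contDiff_faceChart (S : Finset (Fin (N + 1))) (v : Fin (N + 1)) :
    ContDiff ℝ 1 (faceChart S v) := by
  unfold faceChart
  fun_prop

theorem sum_faceChart {v : Fin (N + 1)} (T : Finset (Fin (N + 1))) (z : ↥(S.erase v) → ℝ) :
    ∑ w ∈ T, faceChart S v z w = (if v ∈ T then 1 else 0) +
      ∑ u, z u * ((if (u : Fin (N + 1)) ∈ T then 1 else 0) - if v ∈ T then 1 else 0) := by
  simp only [faceChart, Pi.add_apply, Finset.sum_apply, Pi.smul_apply, Pi.sub_apply, smul_eq_mul,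
    Finset.sum_add_distrib, Finset.sum_pi_single']
  rw [Finset.sum_comm]
  simp only [← Finset.mul_sum, Finset.sum_sub_distrib, Finset.sum_pi_single']

theorem faceChart_restrict {v : Fin (N + 1)} (hv : v ∈ S) {x : Fin (N + 1) → ℝ}
    (hx : x ∈ simpFace S) : faceChart S v (fun u => x u) = x := by
  have hxv : (1 - ∑ u ∈ S.erase v, x u) = x v := by
    rw [← sum_eq_one_of_mem_simpFace hx, ← Finset.add_sum_erase S x hv, add_sub_cancel_right]
  let e (u : Fin (N + 1)) : Fin (N + 1) → ℝ := Pi.single u 1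
  calc faceChart S v (fun u => x u)
    _ = e v + ∑ u ∈ S.erase v, x u • (e u - e v) :=
      congrArg (e v + ·) (Finset.sum_coe_sort (S.erase v) fun u => x u • (e u - e v))
    _ = (1 - ∑ u ∈ S.erase v, x u) • e v + ∑ u ∈ S.erase v, x u • e u := by
      simp only [smul_sub, Finset.sum_sub_distrib, sub_smul, one_smul, Finset.sum_smul]
      abel
    _ = ∑ u ∈ S, x u • e u := by rw [hxv, Finset.add_sum_erase S (fun u => x u • e u) hv]
    _ = ∑ u, x u • e u :=
      Finset.sum_subset (Finset.subset_univ S) fun u _ hu => by rw [hx.2 u hu, zero_smul]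
    _ = x := (pi_eq_sum_univ' x).symm

theorem faceChart_image_image_restrict {v : Fin (N + 1)} (hv : v ∈ S) :
    faceChart S v '' ((fun x (u : ↥(S.erase v)) => x u) '' simpFace S) = simpFace S := by
  rw [image_image, image_congr fun x hx => faceChart_restrict hv hx, image_id']

theorem dimH_simpFace_le {n : ℕ} (hS : S.card = n + 1) : dimH (simpFace S) ≤ n := by
  obtain ⟨v, hv⟩ := Finset.card_pos.1 (hS.trans_gt n.succ_pos)
  have hsub : simpFace S ⊆ range (faceChart S v) := fun x hx => ⟨_, faceChart_restrict hv hx⟩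
  refine (dimH_mono hsub).trans ((contDiff_faceChart S v).dimH_range_le.trans_eq ?_)
  rw [Module.finrank_fintype_fun_eq_card, Fintype.card_coe, Finset.card_erase_of_mem hv, hS,
    Nat.add_sub_cancel]

end Faces

section Winding

variable {N k d q : ℕ} {S : Finset (Fin (N + 1))} {E : Type*}

theorem inWne_iff_not_extendsOver {f : (Fin (N + 1) → ℝ) → Euc d} (hS : S.Nonempty) {p : Euc d} :
    InWne d f S p ↔ ¬ ExtendsOver f (simpFaceBoundary S) (simpFace S) {p}ᶜ := by
  have := (convex_simpFace S).contractibleSpace (simpFace_nonempty hS)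
  rw [InWne, ← extendsOver_iff_homotopic_const (isClosed_simpFaceBoundary S) (fun _ hx => hx.1)
    isOpen_compl_singleton]
  refine or_iff_right_of_imp ?_
  rintro ⟨x, hx, hxp⟩ ⟨G, -, hGf, hGp⟩
  exact hGp hx.1 ((hGf hx).trans hxp)

/-- The condition that the face `σ_S` imposes on a winding point `p` of a map on the `k`-skeleton:
the map does not extend over `σ_S` without hitting `p`. For `|S| ≤ k + 1` this means that `p` is in
the image of `σ_S`, and for `|S| = k + 2` that `p ∈ W_{≠0}(f|_{∂σ_S})`. -/
def IsWindingPoint [TopologicalSpace E] (k : ℕ) (f : (Fin (N + 1) → ℝ) → E)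
    (S : Finset (Fin (N + 1))) (p : E) : Prop :=
  ¬ ExtendsOver f (simpFace S ∩ skel N k) (simpFace S) {p}ᶜ

theorem isWindingPoint_iff_mem_image [NormedAddCommGroup E] [NormedSpace ℝ E]
    [FiniteDimensional ℝ E] {f : (Fin (N + 1) → ℝ) → E} (hf : ContinuousOn f (skel N k))
    (hS : S.card ≤ k + 1) {p : E} :
    IsWindingPoint k f S p ↔ p ∈ f '' simpFace S := by
  have hSk := simpFace_subset_skel hS
  rw [IsWindingPoint, inter_eq_left.2 hSk,
    extendsOver_self_iff (isCompact_simpFace S).isClosed (hf.mono hSk)]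
  simp only [MapsTo, mem_compl_singleton_iff, not_forall, not_not, mem_image, exists_prop]

theorem isWindingPoint_iff_inWne {f : (Fin (N + 1) → ℝ) → Euc d} (hS : S.card = k + 2)
    {p : Euc d} : IsWindingPoint k f S p ↔ InWne d f S p := by
  rw [IsWindingPoint, simpFace_inter_skel_of_card_eq hS,
    inWne_iff_not_extendsOver (Finset.card_pos.1 (by omega))]

theorem isWindingPartition_iff {f : (Fin (N + 1) → ℝ) → Euc (k + 1)}
    (hf : ContinuousOn f (skel N k)) {P : Finset (Finset (Fin (N + 1)))} :
    IsWindingPartition (k + 1) q f P ↔ P.card = q ∧ (∀ S ∈ P, S.Nonempty) ∧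
      (∀ S ∈ P, S.card ≤ k + 2) ∧ (∀ S ∈ P, ∀ T ∈ P, S ≠ T → Disjoint S T) ∧
      ∃ p, ∀ S ∈ P, IsWindingPoint k f S p := by
  have hpoint {S : Finset (Fin (N + 1))} (hS : S.card ≤ k + 2) (p : Euc (k + 1)) :
      (S.card ≤ k + 1 → p ∈ f '' simpFace S) ∧ (S.card = k + 1 + 1 → InWne (k + 1) f S p) ↔
        IsWindingPoint k f S p := by
    rcases Nat.le_succ_iff.1 hS with hS | hS
    · simp [isWindingPoint_iff_mem_image hf hS, hS, (Nat.lt_succ_of_le hS).ne]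
    · simp [isWindingPoint_iff_inWne hS, hS]
  exact and_congr_right fun _ => and_congr_right fun _ => and_congr_right fun hcard =>
    and_congr_right fun _ => exists_congr fun p => forall₂_congr fun S hS => hpoint (hcard S hS) p

theorem IsWindingPartition.isTverbergPartition {F : (Fin (N + 1) → ℝ) → Euc d}
    {P : Finset (Finset (Fin (N + 1)))} (hP : IsWindingPartition d q F P)
    (hF : ContinuousOn F (stdSimp N)) : IsTverbergPartition q F P := by
  obtain ⟨hcard, hne, hle, hdisj, p, hp⟩ := hP
  refine ⟨hcard, hne, hdisj, p, mem_iInter₂.2 fun S hS => ?_⟩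
  rcases Nat.le_succ_iff.1 (hle S hS) with hSd | hSd
  · exact (hp S hS).1 hSd
  · by_contra hpS
    obtain ⟨G, hG, hGF⟩ := exists_continuous_eqOn_of_isClosed (isCompact_stdSimp N).isClosed hF
    refine (inWne_iff_not_extendsOver (hne S hS)).1 ((hp S hS).2 hSd)
      ⟨G, hG, fun x hx => hGF hx.1.1, fun x hx hxp => hpS ⟨x, hx, ?_⟩⟩
    rw [← hGF hx.1]
    exact hxp

theorem exists_pos_forall_near_isWindingPartition {f : (Fin (N + 1) → ℝ) → Euc (k + 1)}
    (hf : ContinuousOn f (skel N k)) (q : ℕ) :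
    ∃ δ > 0, ∀ f' : (Fin (N + 1) → ℝ) → Euc (k + 1), ContinuousOn f' (skel N k) →
      (∀ x ∈ skel N k, ‖f' x - f x‖ < δ) →
      ∀ P, IsWindingPartition (k + 1) q f' P → IsWindingPartition (k + 1) q f P := by
  have hP (P : Finset (Finset (Fin (N + 1)))) : ∃ δ > 0,
      ∀ f' : (Fin (N + 1) → ℝ) → Euc (k + 1), ContinuousOn f' (skel N k) →
        (∀ x ∈ skel N k, ‖f' x - f x‖ < δ) →
        IsWindingPartition (k + 1) q f' P → IsWindingPartition (k + 1) q f P := by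
    by_cases hp : ∃ p, ∀ S ∈ P, IsWindingPoint k f S p
    · refine ⟨1, one_pos, fun f' hf' _ hf'P => ?_⟩
      obtain ⟨hcard, hne, hle, hdisj, -⟩ := (isWindingPartition_iff hf').1 hf'P
      exact (isWindingPartition_iff hf).2 ⟨hcard, hne, hle, hdisj, hp⟩
    · simp only [IsWindingPoint, not_exists, not_forall, not_not, exists_prop] at hp
      obtain ⟨δ, hδ, hδP⟩ := exists_pos_forall_near_exists_extendsOver
        (fun S _ => (isCompact_simpFace S).isClosed.inter (isCompact_skel N k).isClosed)
        (fun S _ => isCompact_simpFace S) (fun S _ => inter_subset_left)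
        (fun S _ => hf.mono inter_subset_right) hp
      refine ⟨δ, hδ, fun f' hf' hff' hf'P => ?_⟩
      obtain ⟨-, -, -, -, p, hp'⟩ := (isWindingPartition_iff hf').1 hf'P
      obtain ⟨S, hS, hSp⟩ := hδP f' (fun S _ => hf'.mono inter_subset_right)
        (fun S _ x hx => (dist_eq_norm (f' x) (f x)).trans_lt (hff' x hx.2)) p
      exact absurd hSp (hp' S hS)
  choose δ hδ hδP using hP
  obtain ⟨P₀, hP₀⟩ := Finite.exists_min δ
  exact ⟨δ P₀, hδ P₀, fun f' hf' hff' P => hδP P f' hf' fun x hx => (hff' x hx).trans_le (hP₀ P)⟩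

end Winding

section Gluing

theorem exists_continuous_eqOn_forall_mapsTo {ι X E : Type*} [Finite ι] [TopologicalSpace X]
    [NormalSpace X] [NormedAddCommGroup E] [NormedSpace ℝ E] [FiniteDimensional ℝ E] {A : Set X}
    {C : ι → Set X} {f : X → E} {U : ι → Set E} (hA : IsClosed A) (hC : ∀ i, IsClosed (C i))
    (hCA : ∀ i j, i ≠ j → C i ∩ C j ⊆ A) (hf : ContinuousOn f A)
    (h : ∀ i, ExtendsOver f (C i ∩ A) (C i) (U i)) :
    ∃ F : X → E, Continuous F ∧ EqOn F f A ∧ ∀ i, MapsTo F (C i) (U i) := by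
  classical
  choose G hG hGf hGU using h
  let F₀ (x : X) : E := if h : x ∉ A ∧ ∃ i, x ∈ C i then G h.2.choose x else f x
  have hF₀A : EqOn F₀ f A := fun x hx => dif_neg fun h => h.1 hx
  have hF₀C (i : ι) : EqOn F₀ (G i) (C i) := by
    intro x hx
    by_cases hxA : x ∈ A
    · exact (hF₀A hxA).trans (hGf i ⟨hx, hxA⟩).symm
    · have hxC : ∃ j, x ∈ C j := ⟨i, hx⟩
      have hi : hxC.choose = i := by_contra fun hne => hxA (hCA _ _ hne ⟨hxC.choose_spec, hx⟩)
      rw [← hi]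
      exact dif_pos ⟨hxA, hxC⟩
  have hclosed : IsClosed (⋃ i, C i) := isClosed_iUnion_of_finite hC
  have hcont : ContinuousOn F₀ (⋃ i, C i) := (locallyFinite_of_finite C).continuousOn_iUnion hC
    fun i => (hG i).continuousOn.congr (hF₀C i)
  obtain ⟨F, hF, hFF₀⟩ := exists_continuous_eqOn_of_isClosed (hclosed.union hA)
    (hcont.union_of_isClosed (hf.congr hF₀A) hclosed hA)
  refine ⟨F, hF, fun x hx => (hFF₀ (.inr hx)).trans (hF₀A hx), fun i x hx => ?_⟩
  rw [hFF₀ (.inl (mem_iUnion_of_mem i hx)), hF₀C i hx]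
  exact hGU i hx

theorem exists_continuous_eqOn_skel_forall_isWindingPoint {N k : ℕ} (hk : 2 ≤ k)
    {g : (Fin (N + 1) → ℝ) → Euc (k + 1)} (hg : ContinuousOn g (skel N k))
    (Q : Finset (Euc (k + 1))) :
    ∃ F : (Fin (N + 1) → ℝ) → Euc (k + 1), Continuous F ∧ EqOn F g (skel N k) ∧
      ∀ S : Finset (Fin (N + 1)), S.card = k + 2 → ∀ p ∈ Q, p ∈ F '' simpFace S →
        IsWindingPoint k g S p := by
  classical
  let Q' (S : Finset (Fin (N + 1))) : Finset (Euc (k + 1)) :=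
    Q.filter fun p => ¬ IsWindingPoint k g S p
  have hext (S : {S : Finset (Fin (N + 1)) // S.card = k + 2}) :
      ExtendsOver g (simpFace S.1 ∩ skel N k) (simpFace S.1) (Q' S)ᶜ :=
    extendsOver_compl_finset (by simpa) (isCompact_simpFace S.1)
      ((isCompact_simpFace S.1).isClosed.inter (isCompact_skel N k).isClosed)
      inter_subset_left (by simpa using dimH_simpFace_le S.2) (hg.mono inter_subset_right)
      (Q' S) fun p hp => not_not.1 (Finset.mem_filter.1 hp).2
  obtain ⟨F, hF, hFg, hFQ⟩ := exists_continuous_eqOn_forall_mapsTo (isCompact_skel N k).isClosed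
    (fun S => (isCompact_simpFace S.1).isClosed)
    (fun S T hST =>
      simpFace_inter_simpFace_subset_skel S.2 T.2 (Subtype.coe_injective.ne hST)) hg hext
  refine ⟨F, hF, hFg, fun S hS p hpQ ⟨x, hx, hxp⟩ => by_contra fun hp => ?_⟩
  rw [← hxp] at hp hpQ
  exact hFQ ⟨S, hS⟩ hx (Finset.mem_coe.2 (Finset.mem_filter.2 ⟨hpQ, hp⟩))

end Gluing

section GenericFaces

variable {N k : ℕ} {E : Type*} [NormedAddCommGroup E] [NormedSpace ℝ E]

/-- A nonempty family of pairwise disjoint nonempty vertex sets for which the expected dimension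
`∑ (|S| - 1) - (|𝓕| - 1) d` of the common intersection of the images of the faces `σ_S` under a map
to `ℝ^d` is at most zero. The inequality is stated without subtraction. -/
structure IsSparseFamily {α : Type*} (d : ℕ) (𝓕 : Finset (Finset α)) : Prop where
  nonempty : 𝓕.Nonempty
  nonempty_of_mem : ∀ S ∈ 𝓕, S.Nonempty
  disjoint : ∀ S ∈ 𝓕, ∀ T ∈ 𝓕, S ≠ T → Disjoint S T
  card_le : d + ∑ S ∈ 𝓕, S.card ≤ (d + 1) * 𝓕.card

/-- `F` is in general position with respect to the faces of the simplex: the images of the faces in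
a sparse family meet in finitely many points, and in none if the expected dimension is negative. -/
def IsGeneralPosition (F : (Fin (N + 1) → ℝ) → E) : Prop :=
  ∀ 𝓕 : Finset (Finset (Fin (N + 1))), IsSparseFamily (Module.finrank ℝ E) 𝓕 →
    (⋂ S ∈ 𝓕, F '' simpFace S).Finite ∧
    (Module.finrank ℝ E + ∑ S ∈ 𝓕, S.card < (Module.finrank ℝ E + 1) * 𝓕.card →
      ⋂ S ∈ 𝓕, F '' simpFace S = ∅)

theorem IsSparseFamily.mem_iff_eq {α : Type*} {d : ℕ} {𝓕 : Finset (Finset α)}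
    (h𝓕 : IsSparseFamily d 𝓕) {S T : Finset α} (hS : S ∈ 𝓕) (hT : T ∈ 𝓕) {w : α} (hw : w ∈ S) :
    w ∈ T ↔ T = S :=
  ⟨fun hwT => by_contra fun hTS => Finset.disjoint_left.1 (h𝓕.disjoint T hT S hS hTS) hwT hw,
    fun hTS => hTS ▸ hw⟩

theorem sum_card_erase_add_card {α : Type*} [DecidableEq α] {𝓕 : Finset (Finset α)} {v : 𝓕 → α}
    (hv : ∀ S : 𝓕, v S ∈ S.1) : ∑ S : 𝓕, (S.1.erase (v S)).card + 𝓕.card = ∑ S ∈ 𝓕, S.card := by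
  rw [← Finset.sum_coe_sort 𝓕, ← Fintype.card_coe 𝓕, ← Finset.card_univ,
    Finset.card_eq_sum_ones, ← Finset.sum_add_distrib]
  exact Finset.sum_congr rfl fun S _ => Finset.card_erase_add_one (hv S)

theorem exists_isOpen_dense_biInter_image_simpFace_finite [FiniteDimensional ℝ E]
    {F : (Fin (N + 1) → ℝ) → E} (hF : ContDiff ℝ 1 F) {𝓕 : Finset (Finset (Fin (N + 1)))}
    (h𝓕 : IsSparseFamily (Module.finrank ℝ E) 𝓕) :
    ∃ O : Set ((Fin (N + 1) → ℝ) →L[ℝ] E), IsOpen O ∧ Dense O ∧ ∀ a ∈ O,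
      (⋂ S ∈ 𝓕, (F + ⇑a) '' simpFace S).Finite ∧
      (Module.finrank ℝ E + ∑ S ∈ 𝓕, S.card < (Module.finrank ℝ E + 1) * 𝓕.card →
        ⋂ S ∈ 𝓕, (F + ⇑a) '' simpFace S = ∅) := by
  classical
  have := h𝓕.nonempty.to_subtype
  choose v hv using fun S : 𝓕 => h𝓕.nonempty_of_mem S S.2
  let ℓ : (Fin (N + 1) → ℝ) →L[ℝ] 𝓕 → ℝ :=
    .pi fun T => ∑ w ∈ T.1, ContinuousLinearMap.proj w
  have hℓ (S : 𝓕) (z : ↥(S.1.erase (v S)) → ℝ) : ℓ (faceChart S.1 (v S) z) = Pi.single S 1 := by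
    ext T
    have hmem {w : Fin (N + 1)} (hw : w ∈ S.1) : w ∈ T.1 ↔ T = S :=
      (h𝓕.mem_iff_eq S.2 T.2 hw).trans Subtype.ext_iff.symm
    have hu (u : ↥(S.1.erase (v S))) := hmem (Finset.mem_of_mem_erase u.2)
    simp only [ℓ, ContinuousLinearMap.coe_pi', sum_apply, ContinuousLinearMap.proj_apply,
      sum_faceChart, hu, hmem (hv S), sub_self, mul_zero, Finset.sum_const_zero, add_zero,
      Pi.single_apply]
  have hcard := sum_card_erase_add_card hv
  have hcodim : (𝓕.card - 1) * Module.finrank ℝ E + Module.finrank ℝ E + 𝓕.card =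
      (Module.finrank ℝ E + 1) * 𝓕.card := by
    rw [← Nat.succ_mul, Nat.succ_eq_add_one, Nat.sub_add_cancel (Finset.card_pos.2 h𝓕.nonempty)]
    ring
  have hsparse := h𝓕.card_le
  obtain ⟨O, hO, hOd, hO𝓕⟩ := exists_isOpen_dense_iInter_image_finite hF
    (fun S : 𝓕 => contDiff_faceChart S.1 (v S))
    (K := fun S => (fun x u => x u) '' simpFace S.1)
    (fun S => (isCompact_simpFace S.1).image (by fun_prop)) hℓ
    (by simp only [Module.finrank_fintype_fun_eq_card, Fintype.card_coe]; omega)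
  simp only [faceChart_image_image_restrict (hv _), Module.finrank_fintype_fun_eq_card,
    Fintype.card_coe, iInter_subtype] at hO𝓕
  exact ⟨O, hO, hOd, fun a ha => ⟨(hO𝓕 a ha).1, fun hlt => (hO𝓕 a ha).2 (by omega)⟩⟩

theorem exists_norm_lt_isGeneralPosition [FiniteDimensional ℝ E] {F : (Fin (N + 1) → ℝ) → E}
    (hF : ContDiff ℝ 1 F) {ε : ℝ} (hε : 0 < ε) :
    ∃ a : (Fin (N + 1) → ℝ) →L[ℝ] E, ‖a‖ < ε ∧ IsGeneralPosition (F + ⇑a) := by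
  choose O hO hOd hO𝓕 using
    fun 𝓕 : {𝓕 : Finset (Finset (Fin (N + 1))) // IsSparseFamily (Module.finrank ℝ E) 𝓕} =>
      exists_isOpen_dense_biInter_image_simpFace_finite hF 𝓕.2
  obtain ⟨a, haO, ha⟩ := (dense_iInter_of_isOpen hO hOd).exists_mem_open
    (isOpen_ball (x := 0) (ε := ε)) ⟨0, mem_ball_self hε⟩
  exact ⟨a, mem_ball_zero_iff.1 ha, fun 𝓕 h𝓕 => hO𝓕 ⟨𝓕, h𝓕⟩ a (mem_iInter.1 haO _)⟩

theorem norm_le_one_of_mem_stdSimp {x : Fin (N + 1) → ℝ} (hx : x ∈ stdSimp N) : ‖x‖ ≤ 1 :=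
  (pi_norm_le_iff_of_nonneg zero_le_one).2 fun i => by
    rw [Real.norm_of_nonneg (hx.1 i), ← hx.2]
    exact Finset.single_le_sum (fun j _ => hx.1 j) (Finset.mem_univ i)

theorem exists_continuous_near_isGeneralPosition [FiniteDimensional ℝ E]
    {f : (Fin (N + 1) → ℝ) → E} (hf : ContinuousOn f (skel N k)) {ε : ℝ} (hε : 0 < ε) :
    ∃ F : (Fin (N + 1) → ℝ) → E, Continuous F ∧ (∀ x ∈ skel N k, ‖F x - f x‖ < ε) ∧
      IsGeneralPosition F := by
  obtain ⟨f₀, hf₀, hf₀f⟩ := exists_continuous_eqOn_of_isClosed (isCompact_skel N k).isClosed hf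
  obtain ⟨f₁, hf₁, hf₁f₀, -⟩ := hf₀.exists_contDiff_approx 1
    (continuous_const (y := ε / 2)) fun _ => half_pos hε
  obtain ⟨a, ha, hgen⟩ := exists_norm_lt_isGeneralPosition hf₁ (half_pos hε)
  refine ⟨f₁ + ⇑a, hf₁.continuous.add a.continuous, fun x hx => ?_, hgen⟩
  have hax : ‖a x‖ ≤ ‖a‖ := a.unit_le_opNorm x (norm_le_one_of_mem_stdSimp hx.1)
  have hf₁x : ‖f₁ x - f x‖ < ε / 2 := by
    rw [← dist_eq_norm, ← hf₀f hx]
    exact hf₁f₀ x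
  calc ‖(f₁ + ⇑a) x - f x‖
    _ = ‖(f₁ x - f x) + a x‖ := by rw [Pi.add_apply, add_sub_right_comm]
    _ ≤ ‖f₁ x - f x‖ + ‖a x‖ := norm_add_le _ _
    _ < ε := by linarith

end GenericFaces

section Counting

variable {d : ℕ}

theorem IsSparseFamily.of_subset {α : Type*} {P R : Finset (Finset α)} (hP : IsSparseFamily d P)
    (hd : 1 ≤ d) (hRP : R ⊆ P) (hR : ∀ S ∈ P, S ∉ R → d + 1 ≤ S.card) : IsSparseFamily d R := by
  classical
  have hcard := Finset.card_sdiff_add_card_eq_card hRP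
  have hsum := Finset.sum_sdiff (f := Finset.card) hRP
  have hlarge : (P \ R).card * (d + 1) ≤ ∑ S ∈ P \ R, S.card :=
    Finset.card_nsmul_le_sum _ _ _ fun S hS =>
      hR S (Finset.mem_sdiff.1 hS).1 (Finset.mem_sdiff.1 hS).2
  have hle : d + ∑ S ∈ R, S.card ≤ (d + 1) * R.card := by
    have := hP.card_le
    rw [← hsum, ← hcard] at this
    linarith
  refine ⟨Finset.nonempty_of_ne_empty ?_, fun S hS => hP.nonempty_of_mem S (hRP hS),
    fun S hS T hT => hP.disjoint S (hRP hS) T (hRP hT), hle⟩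
  rintro rfl
  rw [Finset.sum_empty, Finset.card_empty] at hle
  omega

theorem IsSparseFamily.sum_card_lt_of_subset {α : Type*} {P R : Finset (Finset α)}
    (hP : IsSparseFamily d P) (hd : 1 ≤ d) (hRP : R ⊆ P) (hR : ∀ S ∈ P, S ∉ R → d + 1 ≤ S.card)
    {S : Finset α} (hS : S ∈ P) (hSR : S ∉ R) (hSd : d + 1 < S.card) :
    d + ∑ T ∈ R, T.card < (d + 1) * R.card := by
  classical
  have hinsert := (hP.of_subset hd (Finset.insert_subset hS hRP) fun T hT hTR =>
    hR T hT fun h => hTR (Finset.mem_insert_of_mem h)).card_le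
  rw [Finset.sum_insert hSR, Finset.card_insert_of_notMem hSR] at hinsert
  linarith

variable {N q : ℕ} {P : Finset (Finset (Fin (N + 1)))}

theorem IsTverbergPartition.isSparseFamily {F : (Fin (N + 1) → ℝ) → Euc d}
    (hP : IsTverbergPartition q F P) (hq : 1 ≤ q) (hN : N ≤ (d + 1) * (q - 1)) :
    IsSparseFamily d P := by
  obtain ⟨hcard, hne, hdisj, -⟩ := hP
  refine ⟨Finset.card_pos.1 (by omega), hne, hdisj, ?_⟩
  calc d + ∑ S ∈ P, S.card
    _ = d + (P.biUnion id).card := congrArg (d + ·) (Finset.card_biUnion (t := id) hdisj).symm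
    _ ≤ d + (N + 1) := by gcongr; exact card_finset_fin_le _
    _ ≤ (d + 1) * (q - 1) + (d + 1) := by omega
    _ = (d + 1) * P.card := by
      rw [← Nat.mul_succ, hcard, Nat.succ_eq_add_one, Nat.sub_add_cancel hq]

end Counting

section Approximation

variable {N k q : ℕ}

theorem IsTverbergPartition.isWindingPartition_of_eqOn {F g : (Fin (N + 1) → ℝ) → Euc (k + 1)}
    {P : Finset (Finset (Fin (N + 1)))} (hP : IsTverbergPartition q F P) (hq : 1 ≤ q)
    (hN : N ≤ (k + 2) * (q - 1)) (hgc : ContinuousOn g (skel N k)) (hg : IsGeneralPosition g)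
    (hFg : EqOn F g (skel N k))
    (hF : ∀ 𝓕 : Finset (Finset (Fin (N + 1))), IsSparseFamily (k + 1) 𝓕 →
      ∀ p ∈ ⋂ S ∈ 𝓕, g '' simpFace S, ∀ S : Finset (Fin (N + 1)), S.card = k + 2 →
        p ∈ F '' simpFace S → IsWindingPoint k g S p) :
    IsWindingPartition (k + 1) q g P := by
  have hPsparse := hP.isSparseFamily hq hN
  obtain ⟨hcard, hne, hdisj, p, hp⟩ := hP
  replace hp : ∀ S ∈ P, p ∈ F '' simpFace S := mem_iInter₂.1 hp
  let R : Finset (Finset (Fin (N + 1))) := P.filter fun S => S.card ≤ k + 1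
  have hRP : R ⊆ P := Finset.filter_subset _ _
  have hR (S) (hS : S ∈ P) (hSR : S ∉ R) : k + 2 ≤ S.card :=
    not_le.1 fun h => hSR (Finset.mem_filter.2 ⟨hS, h⟩)
  have hsmall {S : Finset (Fin (N + 1))} (hS : S.card ≤ k + 1) :
      F '' simpFace S = g '' simpFace S := (hFg.mono (simpFace_subset_skel hS)).image_eq
  have hRsparse := hPsparse.of_subset k.succ_pos hRP hR
  have hpR : p ∈ ⋂ S ∈ R, g '' simpFace S := mem_iInter₂.2 fun S hS => by
    rw [← hsmall (Finset.mem_filter.1 hS).2]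
    exact hp S (hRP hS)
  have hle (S) (hS : S ∈ P) : S.card ≤ k + 2 := by
    by_contra! hSk
    have hSR : S ∉ R := fun h => by have := (Finset.mem_filter.1 h).2; omega
    have hlt := hPsparse.sum_card_lt_of_subset k.succ_pos hRP hR hS hSR hSk
    rw [IsGeneralPosition, finrank_euclideanSpace_fin] at hg
    rwa [(hg R hRsparse).2 hlt] at hpR
  refine (isWindingPartition_iff hgc).2 ⟨hcard, hne, hle, hdisj, p, fun S hS => ?_⟩
  rcases Nat.le_succ_iff.1 (hle S hS) with hSk | hSk
  · exact (isWindingPoint_iff_mem_image hgc hSk).2 (hsmall hSk ▸ hp S hS)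
  · exact hF R hRsparse p hpR S hSk (hp S hS)

theorem IsGeneralPosition.exists_finset {d : ℕ} {g : (Fin (N + 1) → ℝ) → Euc d}
    (hg : IsGeneralPosition g) :
    ∃ Q : Finset (Euc d), ∀ 𝓕 : Finset (Finset (Fin (N + 1))), IsSparseFamily d 𝓕 →
      ⋂ S ∈ 𝓕, g '' simpFace S ⊆ Q := by
  rw [IsGeneralPosition, finrank_euclideanSpace_fin] at hg
  have hfin := (toFinite {𝓕 : Finset (Finset (Fin (N + 1))) | IsSparseFamily d 𝓕}).biUnion
    fun 𝓕 h𝓕 => (hg 𝓕 h𝓕).1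
  refine ⟨hfin.toFinset, fun 𝓕 h𝓕 => ?_⟩
  rw [hfin.coe_toFinset]
  exact subset_biUnion_of_mem (u := fun 𝓕 => ⋂ S ∈ 𝓕, g '' simpFace S) h𝓕

theorem exists_near_forall_isWindingPartition (hk : 2 ≤ k) (hq : 1 ≤ q)
    (hN : N ≤ (k + 2) * (q - 1)) {f : (Fin (N + 1) → ℝ) → Euc (k + 1)}
    (hf : ContinuousOn f (skel N k)) {ε : ℝ} (hε : 0 < ε) :
    ∃ F : (Fin (N + 1) → ℝ) → Euc (k + 1), Continuous F ∧ (∀ x ∈ skel N k, ‖F x - f x‖ < ε) ∧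
      ∀ P, IsTverbergPartition q F P → IsWindingPartition (k + 1) q f P := by
  obtain ⟨δ, hδ, hstable⟩ := exists_pos_forall_near_isWindingPartition hf q
  obtain ⟨g, hgc, hgf, hg⟩ := exists_continuous_near_isGeneralPosition hf (lt_min hε hδ)
  obtain ⟨Q, hQ⟩ := hg.exists_finset
  obtain ⟨F, hFc, hFg, hF⟩ :=
    exists_continuous_eqOn_skel_forall_isWindingPoint hk hgc.continuousOn Q
  refine ⟨F, hFc, fun x hx => ?_, fun P hP => ?_⟩
  · rw [hFg hx]
    exact (hgf x hx).trans_le (min_le_left ε δ)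
  · exact hstable g hgc.continuousOn (fun x hx => (hgf x hx).trans_le (min_le_right ε δ)) P
      (hP.isWindingPartition_of_eqOn hq hN hgc.continuousOn hg hFg
        fun 𝓕 h𝓕 p hp S hS hpS => hF S hS p (hQ 𝓕 h𝓕 hp) hpS)

end Approximation

theorem winding_vs_tverberg_general {d q N : ℕ} :
    (∀ F : (Fin (N + 1) → ℝ) → Euc d, ContinuousOn F (stdSimp N) →
      ∀ P, IsWindingPartition d q F P → IsTverbergPartition q F P) ∧
    (3 ≤ d → 1 ≤ q → N ≤ (d + 1) * (q - 1) →
      ∀ f : (Fin (N + 1) → ℝ) → Euc d, ContinuousOn f (skel N (d - 1)) → ∀ ε > 0,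
        ∃ F : (Fin (N + 1) → ℝ) → Euc d, ContinuousOn F (stdSimp N) ∧
          (∀ x ∈ skel N (d - 1), ‖F x - f x‖ < ε) ∧
          ∀ P, IsTverbergPartition q F P → IsWindingPartition d q f P) := by
  refine ⟨fun F hF P hP => hP.isTverbergPartition hF, fun hd hq hN f hf ε hε => ?_⟩
  obtain ⟨k, rfl⟩ : ∃ k, d = k + 1 := ⟨d - 1, by omega⟩
  obtain ⟨F, hF, hFf, hFP⟩ := exists_near_forall_isWindingPartition (by omega) hq hN hf hε
  exact ⟨F, hF.continuousOn, hFf, hFP⟩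

/-- (a) Every winding partition of the restriction of `F` to the `(d-1)`-skeleton is a
Tverberg partition of `F`. (b) For `d ≥ 3`, any continuous map on the `(d-1)`-skeleton
can be slightly distorted and extended to the full simplex so that every Tverberg
partition of the extension is a winding partition of the original map. -/
theorem winding_vs_tverberg (d q : ℕ) (hd : 1 ≤ d) (hq : 1 ≤ q) :
    (∀ F : (Fin ((d+1)*(q-1)+1) → ℝ) → Euc d,
      ContinuousOn F (stdSimp ((d+1)*(q-1))) →
      ∀ P : Finset (Finset (Fin ((d+1)*(q-1)+1))),
        IsWindingPartition d q F P → IsTverbergPartition q F P) ∧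
    (3 ≤ d →
      ∀ f : (Fin ((d+1)*(q-1)+1) → ℝ) → Euc d,
        ContinuousOn f (skel ((d+1)*(q-1)) (d-1)) →
        ∀ ε > (0:ℝ),
        ∃ F : (Fin ((d+1)*(q-1)+1) → ℝ) → Euc d,
          ContinuousOn F (stdSimp ((d+1)*(q-1))) ∧
          (∀ x ∈ skel ((d+1)*(q-1)) (d-1), ‖F x - f x‖ < ε) ∧
          ∀ P : Finset (Finset (Fin ((d+1)*(q-1)+1))),
            IsTverbergPartition q F P → IsWindingPartition d q f P) :=
  ⟨winding_vs_tverberg_general.1, fun hd3 => winding_vs_tverberg_general.2 hd3 hq le_rfl⟩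
end
end

section
/- There exists a continuous map f : S¹ → ℝ² such that f, considered as a continuous map from S¹ into the subspace W_{≠0}(f) of ℝ², is not nullhomotopic (not homotopic to a constant map). -/
/-!
The cubic `z ↦ z ^ 3 - 3 * z` is a covering map away from its critical values `±2`. An arc from
`-√6 + i` to `√6 + i` that passes above the critical points `±1` and below the points `±2` has a
closed image `f` under the cubic. Since `f` has a lift that is not closed, it is not nullhomotopic
in any subset of the plane avoiding `±2`. On the other hand, for `a = ±1` the factorization
`z ^ 3 - 3 * z - 2 * a = (z + a) ^ 2 * (z - 2 * a)` shows that `f` does not wind around `2 * a`: the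
contributions of the arc passing above `-a` (counted twice) and below `2 * a` cancel. So `f` factors
through a translate of the exponential, whose domain is contractible, and `±2` do not belong to
`W_{≠0}(f)`.
-/

noncomputable section

/-- The Euclidean plane `ℝ²`. -/
abbrev E2 : Type := EuclideanSpace ℝ (Fin 2)

/-- The unit circle `S¹ ⊆ ℝ²`. -/
abbrev circleS : Set E2 := Metric.sphere (0 : E2) 1

/-- `W_{≠0}(f)`: the image of `f` together with all points `x` not in the image
such that the corestriction of `f` to `ℝ² \ {x}` is not nullhomotopic. -/
def Wne (f : C(↥circleS, E2)) : Set E2 :=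
  Set.range ⇑f ∪ {x | x ∉ Set.range ⇑f ∧
    ¬ ∃ (g : C(↥circleS, ↥({x}ᶜ : Set E2))) (y : ↥({x}ᶜ : Set E2)),
      (∀ z : ↥circleS, (g z : E2) = f z) ∧ g.Homotopic (ContinuousMap.const _ y)}

open Complex Set

section Lifting

variable {E X A T : Type*} [TopologicalSpace E] [TopologicalSpace X] [TopologicalSpace A]
  [TopologicalSpace T] [PreconnectedSpace T]

theorem lift_eq_of_nullhomotopic {p : E → X} (cov : IsCoveringMap p) {g : C(A, X)}
    (hg : g.Nullhomotopic) {ρ : C(T, A)} {Γ : C(T, E)} (hΓ : ∀ t, p (Γ t) = g (ρ t))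
    {s t : T} (hst : ρ s = ρ t) : Γ s = Γ t := by
  obtain ⟨y, ⟨H⟩⟩ := hg
  let K : C(unitInterval × T, X) :=
    H.toContinuousMap.comp ((ContinuousMap.id unitInterval).prodMap ρ)
  have K_zero : ∀ t, K (0, t) = p (Γ t) := fun t ↦ by simp [K, hΓ]
  let L := cov.liftHomotopy K Γ K_zero
  have L_lifts : ∀ q, p (L q) = K q := congr_fun (cov.liftHomotopy_lifts K Γ K_zero)
  have L_zero : ∀ t, L (0, t) = Γ t := cov.liftHomotopy_zero K Γ K_zero
  have ends_eq : L (1, s) = L (1, t) :=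
    cov.const_of_comp (g := fun r ↦ L (1, r)) (by fun_prop) (fun r r' ↦ by simp [L_lifts, K]) s t
  have tracks_eq : (fun u ↦ L (u, s)) = fun u ↦ L (u, t) :=
    cov.eq_of_comp_eq (by fun_prop) (by fun_prop)
      (funext fun u ↦ by simp [L_lifts, K, hst]) 1 ends_eq
  simpa only [L_zero] using congr_fun tracks_eq 0

theorem lift_eq_of_nullhomotopic_of_isCoveringMapOn {p : E → X} {S : Set X}
    (cov : IsCoveringMapOn p S) {g : C(A, S)} (hg : g.Nullhomotopic) {ρ : C(T, A)} {Γ : C(T, E)}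
    (hΓ : ∀ t, p (Γ t) = g (ρ t)) {s t : T} (hst : ρ s = ρ t) : Γ s = Γ t := by
  have mem : ∀ t, Γ t ∈ p ⁻¹' S := fun t ↦ by simp [hΓ]
  let Γ' : C(T, p ⁻¹' S) := ⟨fun t ↦ ⟨Γ t, mem t⟩, by fun_prop⟩
  have hΓ' : ∀ t, S.restrictPreimage p (Γ' t) = g (ρ t) := fun t ↦ Subtype.ext (hΓ t)
  exact congr_arg Subtype.val
    (lift_eq_of_nullhomotopic cov.isCoveringMap_restrictPreimage hg hΓ' hst)

end Lifting

theorem nullhomotopic_comp_of_contractibleSpace {A Z Y : Type*} [TopologicalSpace A]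
    [TopologicalSpace Z] [TopologicalSpace Y] [ContractibleSpace Z] (k : C(Z, Y)) (h : C(A, Z)) :
    (k.comp h).Nullhomotopic :=
  ((id_nullhomotopic Z).comp_left h).comp_right k

theorem notMem_Wne_comp {Z : Type*} [TopologicalSpace Z] [ContractibleSpace Z] (k : C(Z, E2))
    (h : C(circleS, Z)) {x : E2} (hx : x ∉ range k) : x ∉ Wne (k.comp h) := by
  let k' : C(Z, ({x}ᶜ : Set E2)) :=
    ⟨fun w ↦ ⟨k w, fun hw ↦ hx ⟨w, hw⟩⟩, by fun_prop⟩
  obtain ⟨y, hy⟩ := nullhomotopic_comp_of_contractibleSpace k' h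
  rintro (⟨z, hz⟩ | ⟨-, hnull⟩)
  · exact hx ⟨h z, hz⟩
  · exact hnull ⟨k'.comp h, y, fun _ ↦ rfl, hy⟩

/-- The isometry `z ↦ (re z, im z)` identifying `ℂ` with the Euclidean plane. -/
def planeIso : ℂ ≃ₗᵢ[ℝ] E2 := Complex.orthonormalBasisOneI.repr

/-- The unit circle of the Euclidean plane as the quotient `ℝ / ℤ`. -/
def circleHomeo : UnitAddCircle ≃ₜ circleS :=
  (AddCircle.homeomorphCircle one_ne_zero).trans
    (planeIso.toHomeomorph.subtype fun z ↦ by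
      change z ∈ Metric.sphere 0 1 ↔ planeIso z ∈ Metric.sphere 0 1
      simp only [mem_sphere_zero_iff_norm, planeIso.norm_map])

/-- The closed path running once around the unit circle. -/
def circlePath : C(unitInterval, circleS) where
  toFun s := circleHomeo (s : ℝ)

theorem circlePath_zero_eq_one : circlePath 0 = circlePath 1 := by
  simp [circlePath, AddCircle.coe_period (1 : ℝ)]

theorem circlePath_surjective : Function.Surjective circlePath := by
  intro z
  obtain ⟨s, hs, hsz⟩ := (AddCircle.coe_image_Icc_eq (1 : ℝ) 0).ge (mem_univ (circleHomeo.symm z))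
  refine ⟨⟨s, by simpa using hs⟩, ?_⟩
  simp [circlePath, hsz]

theorem exists_comp_circlePath_eq {Y : Type*} [TopologicalSpace Y] {y : Y} (γ : Path y y) :
    ∃ f : C(circleS, Y), ∀ s, f (circlePath s) = γ s := by
  let F : C(UnitAddCircle, Y) :=
    ⟨AddCircle.liftIco 1 0 γ.extend,
      AddCircle.liftIco_zero_continuous (by simp) γ.continuous_extend.continuousOn⟩
  refine ⟨F.comp ⟨circleHomeo.symm, circleHomeo.symm.continuous⟩, fun s ↦ ?_⟩
  have hF : ∀ s ∈ Ico (0 : ℝ) 1, F s = γ.extend s := fun s hs ↦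
    AddCircle.liftIco_zero_coe_apply (p := 1) (f := γ.extend) hs
  suffices F s = γ s by simpa [circlePath] using this
  rcases s.2.2.lt_or_eq with hs | hs
  · simpa using hF s ⟨s.2.1, hs⟩
  · obtain rfl : s = 1 := Subtype.ext hs
    simpa [AddCircle.coe_period (1 : ℝ)] using hF 0 (by simp)

/-- The cubic with critical points `±1` and critical values `∓2`, whose covering of the complement
of `±2` detects the loop. -/
def cubic (z : ℂ) : ℂ := z ^ 3 - 3 * z

theorem continuous_cubic : Continuous cubic := by
  unfold cubic; fun_prop

theorem isCoveringMapOn_cubic : IsCoveringMapOn cubic {2, -2}ᶜ := by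
  let P : Polynomial ℂ := .X ^ 3 - 3 * .X
  have eval_P : P.eval = cubic := by ext z; simp [P, cubic]
  have critical_values : P.eval '' {z | P.derivative.eval z = 0} ⊆ {2, -2} := by
    rintro _ ⟨z, hz, rfl⟩
    have hz' : (z - 1) * (z + 1) = 0 := by
      have : 3 * z ^ 2 - 3 = 0 := by
        simpa [P, one_add_one_eq_two, two_add_one_eq_three] using hz
      linear_combination this / 3
    rw [eval_P]
    rcases mul_eq_zero.mp hz' with h | h
    · right; rw [Set.mem_singleton_iff, sub_eq_zero.mp h, cubic]; norm_num
    · left; rw [eq_neg_of_add_eq_zero_left h, cubic]; norm_num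
  exact eval_P ▸ P.isCoveringMapOn_eval.mono (compl_subset_compl.mpr critical_values)

theorem isCoveringMapOn_planeIso_comp_cubic :
    IsCoveringMapOn (planeIso ∘ cubic) {planeIso 2, planeIso (-2)}ᶜ := by
  refine (isCoveringMapOn_cubic.homeomorph_comp planeIso.toHomeomorph).mono fun x hx h ↦ hx ?_
  exact h.imp (fun h ↦ planeIso.symm_apply_eq.mp h) (fun h ↦ planeIso.symm_apply_eq.mp h)

/-- The graph of a quartic that is positive at the critical points `±1` of the cubic, negative at
`±2`, and equal to `1` at `±√6`. -/
def arc (x : ℝ) : ℂ := ⟨x, (x ^ 2 - 2) * (x ^ 2 - 5) / 4⟩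

@[fun_prop]
theorem continuous_arc : Continuous arc := by
  unfold arc
  simp only [mk_eq_add_mul_I]
  fun_prop

theorem cubic_arc_of_sq_eq_six {x : ℝ} (hx : x ^ 2 = 6) : cubic (arc x) = 14 * I := by
  have hx' : (x : ℂ) ^ 2 = 6 := by exact_mod_cast hx
  have arc_eq : arc x = x + I := by
    simp only [arc, hx, mk_eq_add_mul_I]; norm_num
  rw [arc_eq, cubic]
  linear_combination (x + 3 * I) * hx' + (3 * x + I) * I_sq

theorem neg_I_mul_arc_add_mem_slitPlane {a : ℝ} (ha : a ^ 2 = 1) (x : ℝ) :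
    -I * (arc x + a) ∈ slitPlane := by
  rcases eq_or_ne x (-a) with rfl | hx
  · left; norm_num [arc, ha]
  · right; simpa [arc, neg_add_eq_zero, eq_neg_iff_add_eq_zero, add_comm] using hx

theorem I_mul_arc_sub_mem_slitPlane {a : ℝ} (ha : a ^ 2 = 1) (x : ℝ) :
    I * (arc x - 2 * a) ∈ slitPlane := by
  rcases eq_or_ne x (2 * a) with rfl | hx
  · left; norm_num [arc, mul_pow, ha]
  · right; simpa [arc, sub_eq_zero] using hx

/-- A logarithm of `-I * (cubic z - 2 * a)`, for `a = ±1`, whose two terms have their cuts on the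
vertical rays downwards from `-a` and upwards from `2 * a`. -/
def logBranch (a : ℝ) (z : ℂ) : ℂ := 2 * log (-I * (z + a)) + log (I * (z - 2 * a))

theorem exp_logBranch {a : ℝ} (ha : a ^ 2 = 1) {z : ℂ} (h₁ : -I * (z + a) ≠ 0)
    (h₂ : I * (z - 2 * a) ≠ 0) : exp (logBranch a z) = -I * (cubic z - 2 * a) := by
  have ha' : (a : ℂ) ^ 2 = 1 := by exact_mod_cast ha
  rw [logBranch, exp_add, two_mul, exp_add, exp_log h₁, exp_log h₂, cubic]
  linear_combination (I * (z + a) ^ 2 * (z - 2 * a)) * I_sq + I * (3 * z + 2 * a) * ha'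

theorem exp_logBranch_arc {a : ℝ} (ha : a ^ 2 = 1) (x : ℝ) :
    exp (logBranch a (arc x)) = -I * (cubic (arc x) - 2 * a) :=
  exp_logBranch ha (slitPlane_ne_zero (neg_I_mul_arc_add_mem_slitPlane ha x))
    (slitPlane_ne_zero (I_mul_arc_sub_mem_slitPlane ha x))

theorem continuous_logBranch_arc {a : ℝ} (ha : a ^ 2 = 1) :
    Continuous fun x ↦ logBranch a (arc x) :=
  (continuous_const.mul
    (Continuous.clog (by fun_prop) (neg_I_mul_arc_add_mem_slitPlane ha))).add
    (Continuous.clog (by fun_prop) (I_mul_arc_sub_mem_slitPlane ha))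

theorem abs_two_mul_arg_add_arg_lt_pi {w v : ℂ} (hw : 0 < w.re) (h : w.im * v.im < 0) :
    |2 * arg w + arg v| < Real.pi := by
  have hw' := abs_lt.mp (abs_arg_lt_pi_div_two_iff.mpr (.inl hw))
  rcases mul_neg_iff.mp h with ⟨hw₀, hv₀⟩ | ⟨hw₀, hv₀⟩
  · have := arg_nonneg_iff.mpr hw₀.le
    have := arg_neg_iff.mpr hv₀
    have := neg_pi_lt_arg v
    rw [abs_lt]; constructor <;> linarith
  · have := arg_neg_iff.mpr hw₀
    have := arg_nonneg_iff.mpr hv₀.le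
    have := arg_le_pi v
    rw [abs_lt]; constructor <;> linarith

theorem abs_im_logBranch_arc_lt_pi {a x : ℝ} (ha : a ^ 2 = 1) (hx : x ^ 2 = 6) :
    |(logBranch a (arc x)).im| < Real.pi := by
  have im_eq : (logBranch a (arc x)).im =
      2 * arg (-I * (arc x + a)) + arg (I * (arc x - 2 * a)) := by
    simp [logBranch, log_im]
  rw [im_eq]
  apply abs_two_mul_arg_add_arg_lt_pi
  · norm_num [arc, hx]
  · have : a * x < 4 := by
      refine lt_of_pow_lt_pow_left₀ 2 (by norm_num) ?_
      rw [mul_pow, ha, hx]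
      norm_num
    suffices -(x + a) * (x - 2 * a) < 0 by simpa [arc] using this
    linarith [show -(x + a) * (x - 2 * a) = a * x - 4 by linear_combination 2 * ha - hx]

theorem logBranch_arc_eq {a x y : ℝ} (ha : a ^ 2 = 1) (hx : x ^ 2 = 6) (hy : y ^ 2 = 6) :
    logBranch a (arc x) = logBranch a (arc y) := by
  have bound_x := abs_lt.mp (abs_im_logBranch_arc_lt_pi ha hx)
  have bound_y := abs_lt.mp (abs_im_logBranch_arc_lt_pi ha hy)
  apply exp_inj_of_neg_pi_lt_of_le_pi bound_x.1 bound_x.2.le bound_y.1 bound_y.2.le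
  rw [exp_logBranch_arc ha, exp_logBranch_arc ha, cubic_arc_of_sq_eq_six hx,
    cubic_arc_of_sq_eq_six hy]

/-- The part of the graph `arc` over `[-√6, √6]`, as a path whose image under `cubic` is closed. -/
def arcPath : Path (arc (-√6)) (arc √6) := (Path.segment (-√6) √6).map continuous_arc

theorem exists_comp_circlePath_eq_cubic_arcPath :
    ∃ f : C(circleS, E2), ∀ s, f (circlePath s) = planeIso (cubic (arcPath s)) := by
  have cubic_closed : cubic (arc (-√6)) = cubic (arc √6) := by
    rw [cubic_arc_of_sq_eq_six (by simp), cubic_arc_of_sq_eq_six (by simp)]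
  exact exists_comp_circlePath_eq ((arcPath.map (planeIso.continuous.comp continuous_cubic)).cast
    rfl (congr_arg planeIso cubic_closed))

theorem planeIso_notMem_Wne {f : C(circleS, E2)}
    (hf : ∀ s, f (circlePath s) = planeIso (cubic (arcPath s))) {a : ℝ} (ha : a ^ 2 = 1) :
    planeIso (2 * a) ∉ Wne f := by
  have ends_eq : logBranch a (arc √6) = logBranch a (arc (-√6)) :=
    logBranch_arc_eq ha (by simp) (by simp)
  obtain ⟨h, hh⟩ := exists_comp_circlePath_eq
    (((Path.segment (-√6) √6).map (continuous_logBranch_arc ha)).cast rfl ends_eq.symm)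
  let k : C(ℂ, E2) := ⟨fun w ↦ planeIso (2 * a + I * exp w), by fun_prop⟩
  have f_eq : f = k.comp h := by
    ext1 z
    obtain ⟨s, rfl⟩ := circlePath_surjective z
    simp [hf, ContinuousMap.comp_apply, hh, k, arcPath, exp_logBranch_arc ha, ← mul_assoc]
  rw [f_eq]
  refine notMem_Wne_comp k h ?_
  rintro ⟨w, hw⟩
  simp [k] at hw

/-- There is a continuous map `f : S¹ → ℝ²` that is not nullhomotopic as a map
into the subspace `W_{≠0}(f)`. -/
theorem exists_not_nullhomotopic_in_Wne :
    ∃ f : C(↥circleS, E2),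
      ¬ ∃ (g : C(↥circleS, ↥(Wne f))) (y : ↥(Wne f)),
        (∀ z : ↥circleS, (g z : E2) = f z) ∧
        g.Homotopic (ContinuousMap.const _ y) := by
  obtain ⟨f, hf⟩ := exists_comp_circlePath_eq_cubic_arcPath
  refine ⟨f, ?_⟩
  rintro ⟨g, y, hg, hom⟩
  have Wne_subset : Wne f ⊆ {planeIso 2, planeIso (-2)}ᶜ := by
    rintro x hx (rfl | rfl)
    · exact planeIso_notMem_Wne hf (one_pow 2) (by simpa using hx)
    · exact planeIso_notMem_Wne hf (a := -1) (by norm_num) (by simpa using hx)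
  have arcPath_lifts : ∀ s, (planeIso ∘ cubic) (arcPath s) = g (circlePath s) := fun s ↦ by
    rw [hg, hf, Function.comp_apply]
  have arcPath_closed : arcPath 0 = arcPath 1 :=
    lift_eq_of_nullhomotopic_of_isCoveringMapOn
      (isCoveringMapOn_planeIso_comp_cubic.mono Wne_subset) ⟨y, hom⟩
      (Γ := arcPath.toContinuousMap) arcPath_lifts circlePath_zero_eq_one
  have arc_ends_eq : arc (-√6) = arc √6 := by
    rwa [arcPath.source, arcPath.target] at arcPath_closed
  have neg_sqrt_eq : -√6 = √6 := congr_arg re arc_ends_eq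
  simp [neg_eq_self] at neg_sqrt_eq
end
end
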